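/- arXiv:1912.07629 — 6 statements merged into one kernel-verified Lean document; each statement's English description precedes it below -/
import Mathlib

section
/- Let σ* > 0, let τ > σ*, and let p be an even nonnegative integer. Then for every σ with 0 < σ < σ*, we have ∫_{|x|>τ} N(0,σ²;x)·x^p dx < ∫_{|x|>τ} N(0,(σ*)²;x)·x^p dx; that is, the truncated p-th moment over the tail region {|x| > τ} is strictly increasing in the standard deviation on (0, σ*]. -/
open MeasureTheory

/-- The univariate Gaussian density `N(0, σ²; x) = (1/(√(2π)·σ))·exp(−x²/(2σ²))`. -/
noncomputable def gpdf (σ x : ℝ) : ℝ :=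
  (Real.sqrt (2 * Real.pi) * σ)⁻¹ * Real.exp (-(x ^ 2) / (2 * σ ^ 2))

theorem gpdf_lt_aux (s t x : ℝ) (hs : 0 < s) (hst : s < t) (hx : t < |x|) :
    gpdf s x < gpdf t x := by
  have ht : 0 < t := hs.trans hst
  have hx2 : t ^ 2 ≤ x ^ 2 := by
    rw [← sq_abs x]; gcongr
  have key : t / s < Real.exp (x ^ 2 / (2 * s ^ 2) - x ^ 2 / (2 * t ^ 2)) := by
    have h1 : ((t / s) ^ 2 - 1) / 2 ≤ x ^ 2 / (2 * s ^ 2) - x ^ 2 / (2 * t ^ 2) := by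
      have e : x ^ 2 / (2 * s ^ 2) - x ^ 2 / (2 * t ^ 2) - ((t / s) ^ 2 - 1) / 2
          = (x ^ 2 - t ^ 2) * (t ^ 2 - s ^ 2) / (2 * s ^ 2 * t ^ 2) := by
        field_simp
      have : 0 ≤ (x ^ 2 - t ^ 2) * (t ^ 2 - s ^ 2) / (2 * s ^ 2 * t ^ 2) := by
        apply div_nonneg _ (by positivity)
        apply mul_nonneg (by linarith)
        nlinarith
      linarith
    have h2 := Real.add_one_le_exp (x ^ 2 / (2 * s ^ 2) - x ^ 2 / (2 * t ^ 2))
    have h3 : 1 < t / s := (one_lt_div hs).2 hst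
    nlinarith [mul_pos (sub_pos.2 h3) (sub_pos.2 h3)]
  have e : Real.exp (-(x ^ 2) / (2 * t ^ 2)) = Real.exp (-(x ^ 2) / (2 * s ^ 2)) *
      Real.exp (x ^ 2 / (2 * s ^ 2) - x ^ 2 / (2 * t ^ 2)) := by
    rw [← Real.exp_add]; congr 1; ring
  have hpi : 0 < Real.sqrt (2 * Real.pi) := by positivity
  have hE := Real.exp_pos (-(x ^ 2) / (2 * s ^ 2))
  unfold gpdf
  rw [e]
  calc (Real.sqrt (2 * Real.pi) * s)⁻¹ * Real.exp (-(x ^ 2) / (2 * s ^ 2))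
      = (Real.sqrt (2 * Real.pi) * t)⁻¹ * (Real.exp (-(x ^ 2) / (2 * s ^ 2)) * (t / s)) := by
        field_simp
    _ < _ := by gcongr

theorem gpdf_integrable_aux (s : ℝ) (hs : 0 < s) (p : ℕ) :
    Integrable (fun x : ℝ => gpdf s x * x ^ p) := by
  have h := integrable_rpow_mul_exp_neg_mul_sq (b := 1 / (2 * s ^ 2)) (by positivity)
    (s := (p : ℝ)) (by have : (0 : ℝ) ≤ p := p.cast_nonneg
                       linarith)
  refine (h.const_mul (Real.sqrt (2 * Real.pi) * s)⁻¹).congr (Filter.Eventually.of_forall ?_)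
  intro x
  simp only [gpdf, Real.rpow_natCast]
  rw [show -(1 / (2 * s ^ 2)) * x ^ 2 = -(x ^ 2) / (2 * s ^ 2) by ring]
  ring

/-- The truncated p-th moment over the tail `{|x| > τ}` is strictly increasing in the
standard deviation on `(0, σ*]`. -/
theorem stmt0 (σstar τ : ℝ) (hσstar : 0 < σstar) (hτ : σstar < τ)
    (p : ℕ) (hp : Even p) (σ : ℝ) (hσ0 : 0 < σ) (hσ : σ < σstar) :
    (∫ x in {x : ℝ | τ < |x|}, gpdf σ x * x ^ p) <
      ∫ x in {x : ℝ | τ < |x|}, gpdf σstar x * x ^ p := by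
  have hm : MeasurableSet {x : ℝ | τ < |x|} :=
    measurableSet_lt measurable_const continuous_abs.measurable
  have hlt : ∀ x ∈ {x : ℝ | τ < |x|}, gpdf σ x * x ^ p < gpdf σstar x * x ^ p := by
    intro x hx
    have hx' : τ < |x| := hx
    have hx0 : x ≠ 0 := by
      rw [← abs_pos]; linarith
    exact mul_lt_mul_of_pos_right (gpdf_lt_aux σ σstar x hσ0 hσ (hτ.trans hx')) (hp.pow_pos hx0)
  have i1 := (gpdf_integrable_aux σ hσ0 p).integrableOn (s := {x : ℝ | τ < |x|})
  have i2 := (gpdf_integrable_aux σstar hσstar p).integrableOn (s := {x : ℝ | τ < |x|})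
  rw [← sub_pos, ← integral_sub i2 i1]
  refine (setIntegral_pos_iff_support_of_nonneg_ae ?_ (i2.sub i1)).2 ?_
  rotate_left
  · refine pos_iff_ne_zero.2 fun h0 => ?_
    have h2 := measure_mono_null (s := Set.Ioi τ) (fun x hx => by
      have hx' : x ∈ {x : ℝ | τ < |x|} := lt_of_lt_of_le hx (le_abs_self x)
      exact ⟨(sub_pos.2 (hlt x hx')).ne', hx'⟩) h0
    simp at h2
  · exact (ae_restrict_iff' hm).2 (Filter.Eventually.of_forall fun x hx => (sub_pos.2 (hlt x hx)).le)
end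

section
/- There is a universal constant c' > 0 such that the following holds. Let F be a mixture of k univariate zero-mean Gaussians with maximum standard deviation σ_max, let p be an even positive integer, let N be a positive integer, and let Z₁,…,Z_N be i.i.d. samples from F. Define the random variable X := (1/N)·∑_{i=1}^N Z_i^p − E_{Z∼F}[Z^p]. Then for every integer t ≥ 2, E[|X|^t] ≤ ( (c'/√N)·σ_max^p·p^{p/2}·t^{p/2+1} )^t. -/
open MeasureTheory ProbabilityTheory

/-- The mixture of `k` univariate zero-mean Gaussians with mixing weights `pw` and
standard deviations `σ`. -/
noncomputable def gaussMixture (k : ℕ) (pw σ : Fin k → ℝ) : Measure ℝ :=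
  ∑ i, ENNReal.ofReal (pw i) • gaussianReal 0 ⟨σ i ^ 2, sq_nonneg (σ i)⟩

/-- Rademacher average of `|a + ∑ ±yᵢ|^t`. -/
noncomputable def radAvg (t : ℕ) : (N : ℕ) → (Fin N → ℝ) → ℝ → ℝ
  | 0, _, a => |a| ^ t
  | N + 1, y, a =>
    (radAvg t N (fun i => y i.succ) (a + y 0) + radAvg t N (fun i => y i.succ) (a - y 0)) / 2

lemma radAvg_continuous (t N : ℕ) :
    Continuous (fun q : (Fin N → ℝ) × ℝ => radAvg t N q.1 q.2) := by
  induction N with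
  | zero => simp only [radAvg]; fun_prop
  | succ N ih =>
    simp only [radAvg]
    refine Continuous.div_const (Continuous.add ?_ ?_) 2
    · exact ih.comp (g := fun q : (Fin N → ℝ) × ℝ => radAvg t N q.1 q.2)
        (f := fun q : (Fin (N + 1) → ℝ) × ℝ => (fun i => q.1 i.succ, q.2 + q.1 0)) (by fun_prop)
    · exact ih.comp (g := fun q : (Fin N → ℝ) × ℝ => radAvg t N q.1 q.2)
        (f := fun q : (Fin (N + 1) → ℝ) × ℝ => (fun i => q.1 i.succ, q.2 - q.1 0)) (by fun_prop)

lemma radAvg_nonneg (t N : ℕ) (y : Fin N → ℝ) (a : ℝ) : 0 ≤ radAvg t N y a := by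
  induction N generalizing a with
  | zero => simp only [radAvg]; positivity
  | succ N ih =>
    simp only [radAvg]
    have := ih (fun i => y i.succ) (a + y 0)
    have := ih (fun i => y i.succ) (a - y 0)
    linarith

lemma radAvg_zero (t N : ℕ) (a : ℝ) : radAvg t N (fun _ => 0) a = |a| ^ t := by
  induction N generalizing a with
  | zero => simp only [radAvg]
  | succ N ih => simp [radAvg, ih]

lemma radAvg_convex (t N : ℕ) (y : Fin N → ℝ) :
    ConvexOn ℝ Set.univ (radAvg t N y) := by
  induction N with
  | zero =>
    have h := (convexOn_norm (convex_univ : Convex ℝ (Set.univ : Set ℝ))).pow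
      (fun x _ => norm_nonneg x) t
    exact h
  | succ N ih =>
    refine ⟨convex_univ, ?_⟩
    intro x _ z _ c d hc hd hcd
    have h1 := (ih (fun i => y i.succ)).2 (Set.mem_univ (x + y 0)) (Set.mem_univ (z + y 0)) hc hd hcd
    have h2 := (ih (fun i => y i.succ)).2 (Set.mem_univ (x - y 0)) (Set.mem_univ (z - y 0)) hc hd hcd
    simp only [radAvg, smul_eq_mul] at *
    have e1 : c * (x + y 0) + d * (z + y 0) = c * x + d * z + y 0 := by
      linear_combination (y 0) * hcd
    have e2 : c * (x - y 0) + d * (z - y 0) = c * x + d * z - y 0 := by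
      linear_combination -(y 0) * hcd
    rw [e1] at h1
    rw [e2] at h2
    linarith

lemma radAvg_le_cosh (t N : ℕ) (y : Fin N → ℝ) (a l : ℝ) (hl : 0 < l) :
    radAvg t N y a ≤ 2 * t.factorial / l ^ t * Real.cosh (l * a) *
      Real.exp (l ^ 2 * (∑ i, y i ^ 2) / 2) := by
  induction N generalizing a with
  | zero =>
    simp only [radAvg, Finset.univ_eq_empty, Finset.sum_empty, mul_zero, zero_div, Real.exp_zero,
      mul_one]
    have h := Real.pow_div_factorial_le_exp (l * |a|) (by positivity) t
    have h2 : Real.exp (l * |a|) ≤ 2 * Real.cosh (l * a) := by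
      rw [← Real.cosh_abs, abs_mul, abs_of_pos hl, Real.cosh_eq]
      have := Real.exp_pos (-(l * |a|))
      linarith
    have h3 := h.trans h2
    rw [div_le_iff₀ (by positivity), mul_pow] at h3
    rw [div_mul_eq_mul_div, le_div_iff₀ (by positivity)]
    linarith
  | succ N ih =>
    simp only [radAvg]
    have h1 := ih (fun i => y i.succ) (a + y 0)
    have h2 := ih (fun i => y i.succ) (a - y 0)
    have hc := Real.cosh_le_exp_half_sq (l * y 0)
    have hs : Real.cosh (l * (a + y 0)) + Real.cosh (l * (a - y 0))
        = 2 * (Real.cosh (l * a) * Real.cosh (l * y 0)) := by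
      rw [mul_add, mul_sub, Real.cosh_add, Real.cosh_sub]; ring
    rw [Fin.sum_univ_succ]
    have he : Real.exp (l ^ 2 * (y 0 ^ 2 + ∑ i : Fin N, y i.succ ^ 2) / 2)
        = Real.exp ((l * y 0) ^ 2 / 2) * Real.exp (l ^ 2 * (∑ i : Fin N, y i.succ ^ 2) / 2) := by
      rw [← Real.exp_add]; congr 1; ring
    rw [he]
    set E := Real.exp (l ^ 2 * (∑ i : Fin N, y i.succ ^ 2) / 2)
    set K := 2 * (t.factorial : ℝ) / l ^ t
    have hK : 0 ≤ K := by positivity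
    have hE : 0 ≤ E := (Real.exp_pos _).le
    have hca : 0 ≤ Real.cosh (l * a) := (Real.cosh_pos _).le
    calc _ ≤ (K * Real.cosh (l * (a + y 0)) * E + K * Real.cosh (l * (a - y 0)) * E) / 2 := by
          linarith
      _ = K * Real.cosh (l * a) * (Real.cosh (l * y 0) * E) := by
          linear_combination (K * E / 2) * hs
      _ ≤ _ := by gcongr

lemma radAvg_khintchine (t N : ℕ) (ht : 2 ≤ t) (y : Fin N → ℝ) :
    radAvg t N y 0 ≤ 4 * t.factorial * Real.sqrt (∑ i, y i ^ 2) ^ t := by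
  have hS : 0 ≤ ∑ i, y i ^ 2 := Finset.sum_nonneg fun i _ => sq_nonneg _
  rcases hS.eq_or_lt with h0 | hpos
  · have : y = fun _ => 0 := by
      funext i
      have := (Finset.sum_eq_zero_iff_of_nonneg (fun i _ => sq_nonneg (y i))).1 h0.symm i
        (Finset.mem_univ i)
      exact pow_eq_zero_iff (two_ne_zero) |>.1 this
    rw [this, radAvg_zero]
    simp [show t ≠ 0 by omega]
  · set s := Real.sqrt (∑ i, y i ^ 2) with hs
    have hspos : 0 < s := Real.sqrt_pos.2 hpos
    have hsq : s ^ 2 = ∑ i, y i ^ 2 := Real.sq_sqrt hS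
    have h := radAvg_le_cosh t N y 0 s⁻¹ (by positivity)
    rw [← hsq] at h
    have e : s⁻¹ ^ 2 * s ^ 2 / 2 = 1 / 2 := by field_simp
    have e2 : Real.exp (1 / 2) ≤ 2 := by
      have h1 : Real.exp (1/2) ^ 2 = Real.exp 1 := by
        rw [← Real.exp_nat_mul]; norm_num
      have := Real.exp_one_lt_d9
      nlinarith [Real.exp_pos (1/2)]
    rw [e] at h
    simp only [mul_zero, Real.cosh_zero, mul_one, inv_pow, div_inv_eq_mul] at h
    refine h.trans ?_
    calc 2 * (t.factorial : ℝ) * s ^ t * Real.exp (1 / 2) ≤ 2 * t.factorial * s ^ t * 2 := by gcongr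
      _ = _ := by ring

lemma norm_two_le (t N : ℕ) (ht : 2 ≤ t) (hN : 0 < N) (y : Fin N → ℝ) :
    Real.sqrt (∑ i, y i ^ 2) ^ t ≤ Real.sqrt N ^ t / N * ∑ i, |y i| ^ t := by
  have h := Real.rpow_sum_le_const_mul_sum_rpow (Finset.univ : Finset (Fin N)) (fun i => y i ^ 2)
    (p := (t : ℝ) / 2) (by rw [le_div_iff₀ (by norm_num)]; norm_num; exact_mod_cast ht)
  have key : ∀ x : ℝ, 0 ≤ x → x ^ ((t : ℝ) / 2) = Real.sqrt x ^ t := by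
    intro x hx
    rw [Real.sqrt_eq_rpow, ← Real.rpow_natCast, ← Real.rpow_mul hx]
    congr 1; ring
  have hN' : (0 : ℝ) < N := by exact_mod_cast hN
  have e1 : ∀ i, |y i ^ 2| = y i ^ 2 := fun i => abs_of_nonneg (sq_nonneg _)
  simp only [e1] at h
  rw [key _ (Finset.sum_nonneg fun i _ => sq_nonneg _), Finset.card_univ, Fintype.card_fin,
    Real.rpow_sub_one hN'.ne', key _ hN'.le] at h
  simp only [key _ (sq_nonneg _), Real.sqrt_sq_eq_abs] at h
  exact h

lemma one_var (μ : Measure ℝ) [IsProbabilityMeasure μ] (Y : ℝ → ℝ) (hYm : Measurable Y)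
    (hY : Integrable Y μ) (hY0 : ∫ x, Y x ∂μ = 0) (f : ℝ → ℝ) (hf : ConvexOn ℝ Set.univ f)
    (hfc : Continuous f) (hf0 : ∀ x, 0 ≤ f x) (a : ℝ) :
    ∫⁻ x, ENNReal.ofReal (f (a + Y x)) ∂μ ≤
      ∫⁻ x, ENNReal.ofReal ((f (a + 2 * Y x) + f (a - 2 * Y x)) / 2) ∂μ := by
  have hJ : ENNReal.ofReal (f a) ≤ ∫⁻ x, ENNReal.ofReal (f (a - 2 * Y x)) ∂μ := by
    by_cases hi : Integrable (fun x => f (a - 2 * Y x)) μ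
    · rw [← ofReal_integral_eq_lintegral_ofReal hi (ae_of_all _ fun x => hf0 _)]
      apply ENNReal.ofReal_le_ofReal
      have h := hf.map_integral_le (μ := μ) (f := fun x => a - 2 * Y x) hfc.continuousOn isClosed_univ
        (ae_of_all _ fun _ => Set.mem_univ _) ((integrable_const a).sub (hY.const_mul 2)) hi
      rw [integral_sub (integrable_const a) (hY.const_mul 2), integral_const_mul, hY0] at h
      simpa using h
    · have : ∫⁻ x, ENNReal.ofReal (f (a - 2 * Y x)) ∂μ = ⊤ := by
        by_contra hne
        apply hi
        refine ⟨(hfc.measurable.comp (by fun_prop)).aestronglyMeasurable, ?_⟩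
        rw [hasFiniteIntegral_iff_ofReal (ae_of_all _ fun x => hf0 _)]
        exact lt_top_iff_ne_top.2 hne
      rw [this]; exact le_top
  have hm : Measurable fun x => ENNReal.ofReal (f (a + 2 * Y x)) :=
    (hfc.measurable.comp (by fun_prop)).ennreal_ofReal
  have hm' : Measurable fun x => ENNReal.ofReal (f (a - 2 * Y x)) :=
    (hfc.measurable.comp (by fun_prop)).ennreal_ofReal
  have e : ∀ u v : ℝ, 0 ≤ u → 0 ≤ v → ENNReal.ofReal ((u + v) / 2) =
      ENNReal.ofReal (1/2) * ENNReal.ofReal u + ENNReal.ofReal (1/2) * ENNReal.ofReal v := by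
    intro u v hu hv
    rw [← ENNReal.ofReal_mul (by norm_num), ← ENNReal.ofReal_mul (by norm_num),
      ← ENNReal.ofReal_add (by positivity) (by positivity)]
    congr 1; ring
  calc ∫⁻ x, ENNReal.ofReal (f (a + Y x)) ∂μ
      ≤ ∫⁻ x, (ENNReal.ofReal (1/2) * ENNReal.ofReal (f (a + 2 * Y x)) +
          ENNReal.ofReal (1/2) * ENNReal.ofReal (f a)) ∂μ := by
        apply lintegral_mono
        intro x
        beta_reduce
        rw [← e _ _ (hf0 _) (hf0 _)]
        apply ENNReal.ofReal_le_ofReal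
        have := hf.2 (Set.mem_univ (a + 2 * Y x)) (Set.mem_univ a)
          (show (0:ℝ) ≤ 1/2 by norm_num) (show (0:ℝ) ≤ 1/2 by norm_num) (by norm_num)
        simp only [smul_eq_mul] at this
        have e2 : 1/2 * (a + 2 * Y x) + 1/2 * a = a + Y x := by ring
        rw [e2] at this
        linarith
    _ = ENNReal.ofReal (1/2) * ∫⁻ x, ENNReal.ofReal (f (a + 2 * Y x)) ∂μ +
          ENNReal.ofReal (1/2) * ENNReal.ofReal (f a) := by
        rw [lintegral_add_right _ measurable_const, lintegral_const_mul _ hm]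
        simp
    _ ≤ ENNReal.ofReal (1/2) * ∫⁻ x, ENNReal.ofReal (f (a + 2 * Y x)) ∂μ +
          ENNReal.ofReal (1/2) * ∫⁻ x, ENNReal.ofReal (f (a - 2 * Y x)) ∂μ := by gcongr
    _ = _ := by
        rw [← lintegral_const_mul _ hm, ← lintegral_const_mul _ hm', ← lintegral_add_left (by fun_prop)]
        exact lintegral_congr fun x => (e _ _ (hf0 _) (hf0 _)).symm

lemma lintegral_pi_succ (μ : Measure ℝ) [IsProbabilityMeasure μ] (N : ℕ)
    (g : (Fin (N + 1) → ℝ) → ENNReal) (hg : Measurable g) :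
    ∫⁻ z, g z ∂(Measure.pi fun _ : Fin (N + 1) => μ) =
      ∫⁻ x, ∫⁻ w, g (Fin.cons x w) ∂(Measure.pi fun _ : Fin N => μ) ∂μ := by
  have h := (measurePreserving_piFinSuccAbove (fun _ : Fin (N + 1) => μ) 0).symm
  rw [← h.lintegral_comp hg, lintegral_prod]
  · have e : ∀ (x : ℝ) (y : Fin N → ℝ),
        (MeasurableEquiv.piFinSuccAbove (fun _ : Fin (N + 1) => ℝ) 0).symm (x, y) =
          (Fin.cons x y : Fin (N + 1) → ℝ) := by
      intro x y
      exact Fin.insertNth_zero (α := fun _ : Fin (N + 1) => ℝ) x y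
    simp only [e]
  · exact (hg.comp (MeasurableEquiv.measurable _)).aemeasurable

lemma symmetrize (t : ℕ) (μ : Measure ℝ) [IsProbabilityMeasure μ] (Y : ℝ → ℝ) (hYm : Measurable Y)
    (hY : Integrable Y μ) (hY0 : ∫ x, Y x ∂μ = 0) (N : ℕ) (a : ℝ) :
    ∫⁻ z, ENNReal.ofReal (|a + ∑ i, Y (z i)| ^ t) ∂(Measure.pi fun _ : Fin N => μ) ≤
      ∫⁻ z, ENNReal.ofReal (radAvg t N (fun i => 2 * Y (z i)) a)
        ∂(Measure.pi fun _ : Fin N => μ) := by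
  induction N generalizing a with
  | zero => simp [radAvg]
  | succ N ih =>
    have hmR : Measurable (fun q : (Fin N → ℝ) × ℝ => radAvg t N q.1 q.2) :=
      (radAvg_continuous t N).measurable
    have hmR' : Measurable (fun q : (Fin (N+1) → ℝ) × ℝ => radAvg t (N+1) q.1 q.2) :=
      (radAvg_continuous t (N+1)).measurable
    have hmeas : Measurable fun z : Fin (N+1) → ℝ =>
        ENNReal.ofReal (radAvg t (N+1) (fun i => 2 * Y (z i)) a) :=
      (hmR'.comp (f := fun z : Fin (N+1) → ℝ => ((fun i => 2 * Y (z i)), a))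
        (by fun_prop)).ennreal_ofReal
    rw [lintegral_pi_succ _ _ _ (by fun_prop), lintegral_pi_succ _ _ _ hmeas]
    simp only [Fin.sum_univ_succ, Fin.cons_zero, Fin.cons_succ, radAvg]
    calc _ ≤ ∫⁻ x, ∫⁻ w, ENNReal.ofReal (radAvg t N (fun i => 2 * Y (w i)) (a + Y x))
            ∂(Measure.pi fun _ : Fin N => μ) ∂μ := by
          apply lintegral_mono
          intro x
          have := ih (a + Y x)
          simpa only [add_assoc] using this
      _ = ∫⁻ w, ∫⁻ x, ENNReal.ofReal (radAvg t N (fun i => 2 * Y (w i)) (a + Y x)) ∂μ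
            ∂(Measure.pi fun _ : Fin N => μ) := by
          apply lintegral_lintegral_swap
          exact (hmR.comp (f := fun q : ℝ × (Fin N → ℝ) => ((fun i => 2 * Y (q.2 i)), a + Y q.1))
            (by fun_prop)).ennreal_ofReal.aemeasurable
      _ ≤ ∫⁻ w, ∫⁻ x, ENNReal.ofReal ((radAvg t N (fun i => 2 * Y (w i)) (a + 2 * Y x) +
            radAvg t N (fun i => 2 * Y (w i)) (a - 2 * Y x)) / 2) ∂μ
            ∂(Measure.pi fun _ : Fin N => μ) := by
          apply lintegral_mono
          intro w
          exact one_var μ Y hYm hY hY0 (radAvg t N (fun i => 2 * Y (w i))) (radAvg_convex t N _)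
            ((radAvg_continuous t N).comp (f := fun b : ℝ => ((fun i => 2 * Y (w i)), b))
              (by fun_prop)) (radAvg_nonneg t N _) a
      _ = _ := by
          symm
          apply lintegral_lintegral_swap
          have h1 := (hmR.comp (f := fun q : ℝ × (Fin N → ℝ) =>
            ((fun i => 2 * Y (q.2 i)), a + 2 * Y q.1)) (by fun_prop))
          have h2 := (hmR.comp (f := fun q : ℝ × (Fin N → ℝ) =>
            ((fun i => 2 * Y (q.2 i)), a - 2 * Y q.1)) (by fun_prop))
          exact ((h1.add h2).div_const 2).ennreal_ofReal.aemeasurable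

lemma mz_bound (t : ℕ) (ht : 2 ≤ t) (μ : Measure ℝ) [IsProbabilityMeasure μ] (Y : ℝ → ℝ)
    (hYm : Measurable Y) (hY : Integrable Y μ) (hY0 : ∫ x, Y x ∂μ = 0) (N : ℕ) (hN : 0 < N) :
    ∫⁻ z, ENNReal.ofReal (|∑ i, Y (z i)| ^ t) ∂(Measure.pi fun _ : Fin N => μ) ≤
      ENNReal.ofReal (4 * t.factorial * 2 ^ t * Real.sqrt N ^ t) *
        ∫⁻ x, ENNReal.ofReal (|Y x| ^ t) ∂μ := by
  have h := symmetrize t μ Y hYm hY hY0 N 0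
  simp only [zero_add] at h
  refine h.trans ?_
  have hN' : (0 : ℝ) < N := by exact_mod_cast hN
  set C : ℝ := 4 * t.factorial * 2 ^ t * (Real.sqrt N ^ t / N) with hC
  have hC0 : 0 ≤ C := by positivity
  calc _ ≤ ∫⁻ z, ENNReal.ofReal C * ∑ i, ENNReal.ofReal (|Y (z i)| ^ t)
        ∂(Measure.pi fun _ : Fin N => μ) := by
        apply lintegral_mono
        intro z
        beta_reduce
        rw [← ENNReal.ofReal_sum_of_nonneg (fun i _ => by positivity), ← ENNReal.ofReal_mul hC0]
        apply ENNReal.ofReal_le_ofReal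
        have h1 := radAvg_khintchine t N ht (fun i => 2 * Y (z i))
        have h2 := norm_two_le t N ht hN (fun i => 2 * Y (z i))
        calc _ ≤ _ := h1
          _ ≤ 4 * t.factorial * (Real.sqrt N ^ t / N * ∑ i, |2 * Y (z i)| ^ t) := by gcongr
          _ = _ := by
            simp only [abs_mul, mul_pow, ← Finset.mul_sum, hC, abs_two]
            ring
    _ = ENNReal.ofReal C * ∑ i : Fin N, ∫⁻ x, ENNReal.ofReal (|Y x| ^ t) ∂μ := by
        rw [lintegral_const_mul _ (by fun_prop), lintegral_finsetSum _ (by fun_prop)]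
        congr 1
        refine Finset.sum_congr rfl fun i _ => ?_
        exact (measurePreserving_eval (fun _ : Fin N => μ) i).lintegral_comp
          (f := fun x => ENNReal.ofReal (|Y x| ^ t)) (by fun_prop)
    _ = _ := by
        rw [Finset.sum_const, Finset.card_univ, Fintype.card_fin, nsmul_eq_mul, ← mul_assoc]
        congr 1
        rw [← ENNReal.ofReal_natCast, ← ENNReal.ofReal_mul hC0, hC]
        congr 1
        field_simp

lemma gauss_moment (s : ℝ) (hs : 0 < s) (n : ℕ) (hn : 2 ≤ n) :
    Integrable (fun x : ℝ => x ^ n) (gaussianReal 0 ⟨s ^ 2, sq_nonneg s⟩) ∧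
    Integrable (fun x : ℝ => |x| ^ n) (gaussianReal 0 ⟨s ^ 2, sq_nonneg s⟩) ∧
    ∫ x, |x| ^ n ∂(gaussianReal 0 ⟨s ^ 2, sq_nonneg s⟩) ≤ s ^ n * Real.sqrt n ^ n := by
  set v : NNReal := ⟨s ^ 2, sq_nonneg s⟩ with hv
  have hi : Integrable (fun x : ℝ => |x| ^ n) (gaussianReal 0 v) :=
    (memLp_id_gaussianReal (μ := 0) (v := v) n).integrable_norm_pow (by omega)
  refine ⟨?_, hi, ?_⟩
  · refine hi.mono' (by fun_prop) (ae_of_all _ fun x => ?_)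
    simp
  have hn' : (0 : ℝ) < n := by positivity
  have hq : 0 < Real.sqrt n := Real.sqrt_pos.2 hn'
  have hq2 : Real.sqrt n ^ 2 = n := Real.sq_sqrt hn'.le
  set q := Real.sqrt n with hqdef
  set l := q / s with hl
  have hl0 : 0 < l := by positivity
  have hpt : ∀ x : ℝ, |x| ^ n ≤ (s ^ n * q ^ n * Real.exp (-n)) *
      (Real.exp (l * x) + Real.exp (-l * x)) := by
    intro x
    have h1 : |x| / (s * q) ≤ Real.exp (|x| / (s * q) - 1) := by
      have := Real.add_one_le_exp (|x| / (s * q) - 1)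
      linarith
    have h2 := pow_le_pow_left₀ (by positivity) h1 n
    rw [← Real.exp_nat_mul, div_pow, div_le_iff₀ (by positivity)] at h2
    have e : (n : ℝ) * (|x| / (s * q) - 1) = -n + l * |x| := by
      rw [hl, ← hq2]; field_simp; ring
    rw [e, Real.exp_add] at h2
    have h3 : Real.exp (l * |x|) ≤ Real.exp (l * x) + Real.exp (-l * x) := by
      rcases abs_cases x with ⟨h, _⟩ | ⟨h, _⟩ <;> rw [h]
      · linarith [Real.exp_pos (-l * x)]
      · rw [mul_neg, ← neg_mul]; linarith [Real.exp_pos (l * x)]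
    calc _ ≤ _ := h2
      _ = (s ^ n * q ^ n * Real.exp (-n)) * Real.exp (l * |x|) := by rw [mul_pow]; ring
      _ ≤ _ := by gcongr
  have hmgf : ∀ c : ℝ, ∫ x, Real.exp (c * x) ∂(gaussianReal 0 v) = Real.exp (s ^ 2 * c ^ 2 / 2) := by
    intro c
    have := congrFun (mgf_fun_id_gaussianReal (μ := 0) (v := v)) c
    have hvs : (v : ℝ) = s ^ 2 := rfl
    simpa only [mgf, zero_mul, zero_add, hvs] using this
  calc _ ≤ ∫ x, (s ^ n * q ^ n * Real.exp (-n)) *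
      (Real.exp (l * x) + Real.exp (-l * x)) ∂(gaussianReal 0 v) :=
        integral_mono hi (((integrable_exp_mul_gaussianReal l).add
          (integrable_exp_mul_gaussianReal (-l))).const_mul _) hpt
    _ = (s ^ n * q ^ n) * (2 * Real.exp (-(n / 2))) := by
        rw [integral_const_mul, integral_add (integrable_exp_mul_gaussianReal l)
          (integrable_exp_mul_gaussianReal (-l)), hmgf, hmgf]
        have e : s ^ 2 * l ^ 2 / 2 = n / 2 := by rw [hl, ← hq2]; field_simp
        have e' : s ^ 2 * (-l) ^ 2 / 2 = n / 2 := by rw [neg_sq, e]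
        have e3 : Real.exp (-(n/2 : ℝ)) = Real.exp (-n) * Real.exp (n/2) := by
          rw [← Real.exp_add]; congr 1; ring
        rw [e, e', e3]; ring
    _ ≤ (s ^ n * q ^ n) * 1 := by
        gcongr
        have h1 : Real.exp (-(n/2 : ℝ)) ≤ Real.exp (-1) := by
          apply Real.exp_le_exp.2
          have : (2 : ℝ) ≤ n := by exact_mod_cast hn
          linarith
        have h2 : Real.exp (-1) ≤ 1/2 := by
          rw [Real.exp_neg, one_div]
          apply inv_anti₀ (by norm_num)
          linarith [Real.add_one_le_exp (1:ℝ)]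
        linarith
    _ = _ := mul_one _

lemma mix_prob (k : ℕ) (pw σ : Fin k → ℝ) (h0 : ∀ i, 0 ≤ pw i) (h1 : ∑ i, pw i = 1) :
    IsProbabilityMeasure (gaussMixture k pw σ) := by
  constructor
  have h : ∀ i, (ENNReal.ofReal (pw i) • gaussianReal 0 ⟨σ i ^ 2, sq_nonneg (σ i)⟩) Set.univ
      = ENNReal.ofReal (pw i) := by
    intro i
    have hg : ∀ (c : ENNReal) (v : NNReal), (c • gaussianReal 0 v) Set.univ = c := by
      intro c v
      rw [Measure.smul_apply, measure_univ, smul_eq_mul, mul_one]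
    exact hg _ _
  rw [gaussMixture, Measure.coe_finsetSum, Finset.sum_apply, Finset.sum_congr rfl fun i _ => h i]
  rw [← ENNReal.ofReal_sum_of_nonneg (fun i _ => h0 i), h1, ENNReal.ofReal_one]

lemma mix_moment (k : ℕ) (pw σ : Fin k → ℝ) (h0 : ∀ i, 0 ≤ pw i) (h1 : ∑ i, pw i = 1)
    (hσ : ∀ i, 0 < σ i) (S : ℝ) (hS : ∀ i, σ i ≤ S) (n : ℕ) (hn : 2 ≤ n) :
    Integrable (fun x : ℝ => x ^ n) (gaussMixture k pw σ) ∧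
    Integrable (fun x : ℝ => |x| ^ n) (gaussMixture k pw σ) ∧
    ∫ x, |x| ^ n ∂(gaussMixture k pw σ) ≤ S ^ n * Real.sqrt n ^ n := by
  have hA : Integrable (fun x : ℝ => |x| ^ n) (gaussMixture k pw σ) := by
    unfold gaussMixture
    rw [integrable_finsetSum_measure]
    intro i _
    exact (gauss_moment (σ i) (hσ i) n hn).2.1.smul_measure ENNReal.ofReal_ne_top
  refine ⟨hA.mono' (by fun_prop) (ae_of_all _ fun x => by simp), hA, ?_⟩
  unfold gaussMixture
  rw [integral_finsetSum_measure]
  · calc _ ≤ ∑ i, pw i * (S ^ n * Real.sqrt n ^ n) := by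
          apply Finset.sum_le_sum
          intro i _
          rw [integral_smul_measure, ENNReal.toReal_ofReal (h0 i), smul_eq_mul]
          apply mul_le_mul_of_nonneg_left _ (h0 i)
          refine (gauss_moment (σ i) (hσ i) n hn).2.2.trans ?_
          have := (hσ i).le
          have := hS i
          gcongr
      _ = _ := by rw [← Finset.sum_mul, h1, one_mul]
  · intro i _
    exact (gauss_moment (σ i) (hσ i) n hn).2.1.smul_measure ENNReal.ofReal_ne_top

/-- Moment bound for the deviation of the empirical `p`-th moment: there is a universal
constant `c' > 0` such that with `X := (1/N)·∑ Zᵢ^p − E[Z^p]` for i.i.d. samples `Zᵢ` from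
the mixture, `E[|X|^t] ≤ ((c'/√N)·σmax^p·p^(p/2)·t^(p/2+1))^t` for every integer `t ≥ 2`. -/
theorem stmt2 :
    ∃ c' : ℝ, 0 < c' ∧
      ∀ (k : ℕ), 0 < k → ∀ (pw σ : Fin k → ℝ),
        (∀ i, 0 ≤ pw i) → (∑ i, pw i = 1) → (∀ i, 0 < σ i) →
        ∀ σmax : ℝ, IsGreatest (Set.range σ) σmax →
        ∀ p : ℕ, Even p → 0 < p →
        ∀ N : ℕ, 0 < N →
        ∀ t : ℕ, 2 ≤ t →
          (∫ z : Fin N → ℝ,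
              |(∑ i, z i ^ p) / (N : ℝ) - ∫ x, x ^ p ∂gaussMixture k pw σ| ^ t
            ∂(Measure.pi fun _ : Fin N => gaussMixture k pw σ)) ≤
          (c' / Real.sqrt N * σmax ^ p * (p : ℝ) ^ ((p : ℝ) / 2) *
            (t : ℝ) ^ ((p : ℝ) / 2 + 1)) ^ t := by
  refine ⟨32, by norm_num, ?_⟩
  intro k _ pw σ h0 h1 hσ S hS p hpe hp N hN t ht
  have hSge : ∀ i, σ i ≤ S := fun i => hS.2 ⟨i, rfl⟩
  have hSpos : 0 < S := by
    obtain ⟨i, hi⟩ := hS.1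
    rw [← hi]; exact hσ i
  have hp2 : 2 ≤ p := by
    obtain ⟨r, hr⟩ := hpe
    omega
  have hpt2 : 2 ≤ p * t := by nlinarith
  have := mix_prob k pw σ h0 h1
  obtain ⟨hip, -, -⟩ := mix_moment k pw σ h0 h1 hσ S hSge p hp2
  obtain ⟨hipt, hiapt, hmom⟩ := mix_moment k pw σ h0 h1 hσ S hSge (p * t) hpt2
  set μ := gaussMixture k pw σ with hμ
  set m := ∫ x, x ^ p ∂μ with hm
  have hxp : ∀ x : ℝ, 0 ≤ x ^ p := fun x => hpe.pow_nonneg x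
  have hm0 : 0 ≤ m := integral_nonneg hxp
  set M : ℝ := S ^ (p * t) * Real.sqrt (p * t : ℕ) ^ (p * t) with hM
  have hM0 : 0 ≤ M := by positivity
  have habs : ∀ x : ℝ, |x| ^ (p * t) = (x ^ p) ^ t := by
    intro x
    rw [pow_mul, hpe.pow_abs]
  simp only [habs] at hmom hiapt
  -- Jensen for the mean
  have hmt : m ^ t ≤ ∫ x, (x ^ p) ^ t ∂μ :=
    (convexOn_pow t).map_integral_le (μ := μ) (f := fun x : ℝ => x ^ p)
      (continuous_pow t).continuousOn isClosed_Ici (ae_of_all _ hxp) hip hiapt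
  have hY : Integrable (fun x : ℝ => x ^ p - m) μ := hip.sub (integrable_const m)
  have hY0 : ∫ x, (x ^ p - m) ∂μ = 0 := by
    rw [integral_sub hip (integrable_const m), ← hm]; simp
  have hYt : ∫⁻ x, ENNReal.ofReal (|x ^ p - m| ^ t) ∂μ ≤ ENNReal.ofReal (2 ^ t * M) := by
    calc _ ≤ ∫⁻ x, ENNReal.ofReal (2 ^ (t - 1) * ((x ^ p) ^ t + m ^ t)) ∂μ := by
          apply lintegral_mono
          intro x
          apply ENNReal.ofReal_le_ofReal
          have h := add_pow_le (hxp x) hm0 t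
          refine le_trans ?_ h
          gcongr
          have := hxp x
          rw [abs_le]; constructor <;> linarith
      _ = ENNReal.ofReal (∫ x, 2 ^ (t - 1) * ((x ^ p) ^ t + m ^ t) ∂μ) := by
          rw [ofReal_integral_eq_lintegral_ofReal]
          · exact (hiapt.add (integrable_const _)).const_mul _
          · refine ae_of_all _ fun x => ?_
            have := hxp x
            show 0 ≤ 2 ^ (t - 1) * ((x ^ p) ^ t + m ^ t)
            positivity
      _ ≤ _ := by
          apply ENNReal.ofReal_le_ofReal
          rw [integral_const_mul, integral_add hiapt (integrable_const _)]
          have e : (2 : ℝ) ^ t = 2 ^ (t - 1) * 2 := by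
            rw [← pow_succ]; congr 1; omega
          rw [e, mul_assoc]
          gcongr
          simp
          linarith
  have hmz := mz_bound t ht μ (fun x => x ^ p - m) (by fun_prop) hY hY0 N hN
  have hN' : (0 : ℝ) < N := by exact_mod_cast hN
  have hsq : 0 < Real.sqrt N := Real.sqrt_pos.2 hN'
  have hsq2 : Real.sqrt N ^ 2 = N := Real.sq_sqrt hN'.le
  have hb : ∫ z : Fin N → ℝ, |∑ i, (z i ^ p - m)| ^ t ∂(Measure.pi fun _ : Fin N => μ) ≤
      4 * t.factorial * 2 ^ t * Real.sqrt N ^ t * (2 ^ t * M) := by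
    rw [integral_eq_lintegral_of_nonneg_ae (ae_of_all _ fun z => by positivity)
      (by
        have : Continuous fun z : Fin N → ℝ => |∑ i, (z i ^ p - m)| ^ t := by fun_prop
        exact this.aestronglyMeasurable)]
    apply ENNReal.toReal_le_of_le_ofReal (by positivity)
    rw [ENNReal.ofReal_mul (by positivity)]
    exact hmz.trans (by gcongr)
  have e1 : ∀ z : Fin N → ℝ, |(∑ i, z i ^ p) / (N : ℝ) - m| ^ t =
      (1 / (N : ℝ) ^ t) * |∑ i, (z i ^ p - m)| ^ t := by
    intro z
    rw [Finset.sum_sub_distrib, Finset.sum_const, Finset.card_univ, Fintype.card_fin, nsmul_eq_mul]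
    have : (∑ i, z i ^ p) / (N : ℝ) - m = (∑ i, z i ^ p - N * m) / N := by field_simp
    rw [this, abs_div, abs_of_pos hN', div_pow]; ring
  simp only [e1]
  rw [integral_const_mul]
  have hfac : (t.factorial : ℝ) ≤ (t : ℝ) ^ t := by exact_mod_cast Nat.factorial_le_pow t
  have h4 : (4 : ℝ) ≤ 2 ^ t := by
    calc (4 : ℝ) = 2 ^ 2 := by norm_num
      _ ≤ 2 ^ t := pow_le_pow_right₀ (by norm_num) ht
  have ht0 : (0 : ℝ) < t := by positivity
  have hp0 : (0 : ℝ) < p := by positivity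
  have hhalf : ∀ x : ℝ, 0 ≤ x → x ^ ((p : ℝ) / 2) = Real.sqrt x ^ p := by
    intro x hx
    rw [Real.sqrt_eq_rpow, ← Real.rpow_natCast, ← Real.rpow_mul hx]
    congr 1; ring
  rw [Real.rpow_add_one ht0.ne', hhalf _ hp0.le, hhalf _ ht0.le]
  have hMe : M = (S ^ p * Real.sqrt p ^ p * Real.sqrt t ^ p) ^ t := by
    rw [hM]; push_cast
    rw [Real.sqrt_mul hp0.le, pow_mul, pow_mul, mul_pow, ← mul_pow, mul_assoc]
  calc _ ≤ (1 / (N : ℝ) ^ t) * (4 * t.factorial * 2 ^ t * Real.sqrt N ^ t * (2 ^ t * M)) := by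
        gcongr
    _ ≤ (1 / (N : ℝ) ^ t) * (2 ^ t * (t : ℝ) ^ t * 2 ^ t * Real.sqrt N ^ t * (2 ^ t * M)) := by
        gcongr
    _ = (8 / Real.sqrt N * S ^ p * Real.sqrt p ^ p * (Real.sqrt t ^ p * t)) ^ t := by
        have hNt : (N : ℝ) ^ t = (Real.sqrt N ^ 2) ^ t := by rw [hsq2]
        rw [hMe, hNt, ← one_div_pow]
        simp only [← mul_pow]
        congr 1
        field_simp
        ring
    _ ≤ _ := by
        gcongr
        norm_num
end

section
/- Let d, k ≥ 1, let p₁,…,p_k ≥ 0 sum to 1, let w₁,…,w_k ∈ ℝ^d, let a ∈ ℝ^d, and let ς ≥ 0. Let (x, y) be drawn from the mixture of spherical linear regressions: x is a standard Gaussian vector in ℝ^d, an index I ∈ {1,…,k} is drawn independently with Pr[I = i] = p_i, g ∼ N(0, ς²) is drawn independently, and y := ⟨w_I, x⟩ + g. Define the random matrix M^{x,y}_a := (1/2)·[ (y − ⟨a,x⟩)²·xxᵀ − (y − ⟨a,x⟩)²·I_d ]. Then E[M^{x,y}_a] = ∑_{i=1}^k p_i·(w_i − a)(w_i − a)ᵀ.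 -/
open MeasureTheory ProbabilityTheory

/-- The standard Gaussian measure `N(0, I_d)` on `ℝ^d`. -/
noncomputable def stdGaussian (d : ℕ) : Measure (Fin d → ℝ) :=
  Measure.pi fun _ => gaussianReal 0 1


lemma aux_integrable_pow (v : NNReal) (n : ℕ) :
    Integrable (fun x : ℝ => x ^ n) (gaussianReal 0 v) := by
  have h : (0:ℝ) ∈ interior (integrableExpSet id (gaussianReal 0 v)) := by
    rw [integrableExpSet_id_gaussianReal]; simp
  simpa using integrable_pow_of_mem_interior_integrableExpSet h n

lemma aux_m1 : ∫ x, x ^ 1 ∂(gaussianReal 0 1) = 0 := by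
  simp [integral_id_gaussianReal]

lemma aux_m2 : ∫ x, x ^ 2 ∂(gaussianReal 0 1) = 1 := by
  have h := variance_fun_id_gaussianReal (μ := 0) (v := 1)
  rw [variance_of_integral_eq_zero (by fun_prop) (by simp [integral_id_gaussianReal])] at h
  simpa using h

lemma aux_m4 : ∫ x, x ^ 4 ∂(gaussianReal 0 1) = 3 := by
  have h : (0:ℝ) ∈ interior (integrableExpSet id (gaussianReal 0 1)) := by
    rw [integrableExpSet_id_gaussianReal]; simp
  have h4 := iteratedDeriv_mgf_zero h 4
  rw [mgf_id_gaussianReal] at h4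
  have e : ∀ t : ℝ, HasDerivAt (fun t : ℝ => Real.exp (0 * t + (1:NNReal) * t ^ 2 / 2))
      (t * Real.exp (0 * t + (1:NNReal) * t ^ 2 / 2)) t := by
    intro t
    have h1 : HasDerivAt (fun t : ℝ => 0 * t + (1:NNReal) * t ^ 2 / 2) t t := by
      have := ((hasDerivAt_id t).pow 2).div_const 2
      have e1 : (fun t : ℝ => 0 * t + ((1:NNReal):ℝ) * t ^ 2 / 2) =
          fun x => (id ^ 2 : ℝ → ℝ) x / 2 := by
        funext x; simp [Pi.pow_apply]
      rw [e1]
      refine this.congr_deriv ?_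
      norm_num
    convert h1.exp using 1
    ring
  obtain ⟨f, hf⟩ : ∃ f : ℝ → ℝ, f = fun t : ℝ => Real.exp (0 * t + (1:NNReal) * t ^ 2 / 2) :=
    ⟨_, rfl⟩
  have e' : ∀ t, HasDerivAt f (t * f t) t := by
    intro t; rw [hf]; exact e t
  rw [← hf] at h4
  have d1 : deriv f = fun t => t * f t := by ext t; exact (e' t).deriv
  have d2 : deriv (fun t => t * f t) = fun t => (1 + t ^ 2) * f t := by
    ext t
    have := ((hasDerivAt_id t).mul (e' t)).deriv
    simp only [id] at this
    refine Eq.trans this ?_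
    ring
  have d3 : deriv (fun t => (1 + t ^ 2) * f t) = fun t => (3 * t + t ^ 3) * f t := by
    ext t
    have := ((((hasDerivAt_id t).pow 2).const_add 1).mul (e' t)).deriv
    refine Eq.trans this ?_
    simp
    ring
  have d4 : deriv (fun t => (3 * t + t ^ 3) * f t) =
      fun t => (3 + 6 * t ^ 2 + t ^ 4) * f t := by
    ext t
    have := ((((hasDerivAt_id t).const_mul 3).add ((hasDerivAt_id t).pow 3)).mul (e' t)).deriv
    refine Eq.trans this ?_
    simp
    ring
  have f0 : f 0 = 1 := by rw [hf]; simp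
  rw [iteratedDeriv_eq_iterate] at h4
  simp only [Function.iterate_succ, Function.iterate_zero, Function.comp, id, d1, d2, d3, d4] at h4
  simp [f0] at h4
  exact h4.symm

lemma aux_mono_int {d : ℕ} (c : Fin d → ℕ) :
    Integrable (fun x : Fin d → ℝ => ∏ i, x i ^ c i) (stdGaussian d) := by
  unfold _root_.stdGaussian
  exact Integrable.fintype_prod (f := fun i (x : ℝ) => x ^ c i)
    (fun i => aux_integrable_pow 1 (c i))

lemma aux_mono_eq {d : ℕ} (c : Fin d → ℕ) :
    ∫ x : Fin d → ℝ, ∏ i, x i ^ c i ∂(stdGaussian d) = ∏ i, ∫ x, x ^ c i ∂(gaussianReal 0 1) := by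
  unfold _root_.stdGaussian
  exact integral_fintype_prod_eq_prod (f := fun i (x : ℝ) => x ^ c i)

/-- single-index exponent -/
def auxE {d : ℕ} (l : Fin d) : Fin d → ℕ := fun i => if i = l then 1 else 0

lemma auxE_prod {d : ℕ} (l : Fin d) (x : Fin d → ℝ) : ∏ i, x i ^ auxE l i = x l := by
  simp [auxE, Finset.prod_pow_boole]

lemma aux_i2 {d : ℕ} (j j' : Fin d) :
    Integrable (fun x : Fin d → ℝ => x j * x j') (stdGaussian d) := by
  have := aux_mono_int (fun i => auxE j i + auxE j' i)
  simpa only [pow_add, Finset.prod_mul_distrib, auxE_prod] using this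

lemma aux_i1 {d : ℕ} (j : Fin d) :
    Integrable (fun x : Fin d → ℝ => x j) (stdGaussian d) := by
  have := aux_mono_int (fun i => auxE j i)
  simpa only [pow_add, Finset.prod_mul_distrib, auxE_prod] using this

lemma aux_i3 {d : ℕ} (l j j' : Fin d) :
    Integrable (fun x : Fin d → ℝ => x l * (x j * x j')) (stdGaussian d) := by
  have := aux_mono_int (fun i => auxE l i + (auxE j i + auxE j' i))
  simpa only [pow_add, Finset.prod_mul_distrib, auxE_prod] using this

lemma aux_i4 {d : ℕ} (l m j j' : Fin d) :
    Integrable (fun x : Fin d → ℝ => x l * x m * (x j * x j')) (stdGaussian d) := by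
  have := aux_mono_int (fun i => auxE l i + auxE m i + (auxE j i + auxE j' i))
  simpa only [pow_add, Finset.prod_mul_distrib, auxE_prod] using this

lemma aux_e2 {d : ℕ} (j j' : Fin d) :
    ∫ x : Fin d → ℝ, x j * x j' ∂(stdGaussian d) = if j = j' then 1 else 0 := by
  have := aux_mono_eq (fun i => auxE j i + auxE j' i)
  simp only [pow_add, Finset.prod_mul_distrib, auxE_prod] at this
  rw [this]
  simp only [← pow_add]
  split_ifs with h
  · subst h
    refine Finset.prod_eq_one fun i _ => ?_
    by_cases hi : i = j
    · simpa [auxE, hi] using aux_m2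
    · simp [auxE, hi]
  · refine Finset.prod_eq_zero (Finset.mem_univ j) ?_
    simpa [auxE, h] using aux_m1

lemma aux_e4 {d : ℕ} (l m j j' : Fin d) :
    ∫ x : Fin d → ℝ, x l * x m * (x j * x j') ∂(stdGaussian d) =
      (if l = m then 1 else 0) * (if j = j' then 1 else 0)
      + (if l = j then 1 else 0) * (if m = j' then 1 else 0)
      + (if l = j' then 1 else 0) * (if m = j then 1 else 0) := by
  have := aux_mono_eq (fun i => auxE l i + auxE m i + (auxE j i + auxE j' i))
  simp only [pow_add, Finset.prod_mul_distrib, auxE_prod] at this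
  rw [this]
  simp only [← pow_add]
  -- if some index occurs exactly once the moment vanishes
  have hz : ∀ r : Fin d, auxE l r + auxE m r + (auxE j r + auxE j' r) = 1 →
      ∏ i, ∫ x, x ^ (auxE l i + auxE m i + (auxE j i + auxE j' i)) ∂(gaussianReal 0 1) = 0 := by
    intro r hr
    refine Finset.prod_eq_zero (Finset.mem_univ r) ?_
    rw [hr]; exact aux_m1
  have ho : (∀ r : Fin d, auxE l r + auxE m r + (auxE j r + auxE j' r) = 0 ∨
      auxE l r + auxE m r + (auxE j r + auxE j' r) = 2) →
      ∏ i, ∫ x, x ^ (auxE l i + auxE m i + (auxE j i + auxE j' i)) ∂(gaussianReal 0 1) = 1 := by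
    intro hr
    refine Finset.prod_eq_one fun i _ => ?_
    rcases hr i with h | h <;> rw [h]
    · simp
    · exact aux_m2
  have ht : l = m → l = j → l = j' →
      ∏ i, ∫ x, x ^ (auxE l i + auxE m i + (auxE j i + auxE j' i)) ∂(gaussianReal 0 1) = 3 := by
    rintro rfl rfl rfl
    rw [Finset.prod_eq_single l]
    · simpa [auxE] using aux_m4
    · intro b _ hb; simp [auxE, hb]
    · simp
  by_cases h1 : l = m
  · by_cases h2 : j = j'
    · by_cases h3 : l = j
      · rw [ht h1 h3 (h3.trans h2)]; subst h1 h2 h3; norm_num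
      · rw [ho (by intro r; simp only [auxE]; grind)]; grind
    · by_cases h3 : l = j
      · rw [hz j' (by simp only [auxE]; grind)]; grind
      · rw [hz j (by simp only [auxE]; grind)]; grind
  · by_cases h2 : j = j'
    · by_cases h3 : l = j
      · rw [hz m (by simp only [auxE]; grind)]; grind
      · rw [hz l (by simp only [auxE]; grind)]; grind
    · by_cases h3 : l = j
      · by_cases h4 : m = j'
        · rw [ho (by intro r; simp only [auxE]; grind)]; grind
        · rw [hz m (by simp only [auxE]; grind)]; grind
      · by_cases h4 : l = j'
        · by_cases h5 : m = j
          · rw [ho (by intro r; simp only [auxE]; grind)]; grind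
          · rw [hz m (by simp only [auxE]; grind)]; grind
        · rw [hz l (by simp only [auxE]; grind)]; grind

/-- For a sample `(x, y)` from a mixture of spherical linear regressions with mixing weights
`pw`, regressors `w`, and noise rate `ς` — modeled as `ω = (x, g, I)` with `x ∼ N(0, I_d)`,
`g ∼ N(0, ς²)`, `I` drawn with `Pr[I = i] = pw i`, and `y = ⟨w_I, x⟩ + g` — the matrix
`M = (1/2)·[(y − ⟨a,x⟩)²·xxᵀ − (y − ⟨a,x⟩)²·I_d]` satisfies, entrywise,
`E[M] = ∑ i, pw i·(w i − a)(w i − a)ᵀ`. -/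
theorem stmt5 (d k : ℕ) (hd : 0 < d) (hk : 0 < k)
    (pw : Fin k → ℝ) (hpw : ∀ i, 0 ≤ pw i) (hsum : ∑ i, pw i = 1)
    (w : Fin k → Fin d → ℝ) (a : Fin d → ℝ) (ς : ℝ) (hς : 0 ≤ ς) :
    ∀ j j' : Fin d,
      (∫ ω : (Fin d → ℝ) × ℝ × Fin k,
          (1 / 2) *
            ((((∑ l, w ω.2.2 l * ω.1 l) + ω.2.1) - ∑ l, a l * ω.1 l) ^ 2 *
                (ω.1 j * ω.1 j') -
              (((∑ l, w ω.2.2 l * ω.1 l) + ω.2.1) - ∑ l, a l * ω.1 l) ^ 2 *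
                (if j = j' then 1 else 0))
        ∂((stdGaussian d).prod
            ((gaussianReal 0 ⟨ς ^ 2, sq_nonneg ς⟩).prod
              (∑ i, ENNReal.ofReal (pw i) • Measure.dirac i))))
      = ∑ i, pw i * ((w i j - a j) * (w i j' - a j')) := by
  intro j j'
  set μ := stdGaussian d with hμ
  set ν := gaussianReal 0 ⟨ς ^ 2, sq_nonneg ς⟩ with hν
  obtain ⟨v, hv⟩ : ∃ v : NNReal, ν = gaussianReal 0 v := ⟨_, hν⟩
  clear_value ν
  clear hν
  subst hv
  set ν := gaussianReal 0 v with hν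
  set P : Measure (Fin k) := ∑ i, ENNReal.ofReal (pw i) • Measure.dirac i with hP
  have : IsProbabilityMeasure μ := by rw [hμ]; unfold _root_.stdGaussian; infer_instance
  have : IsFiniteMeasure P := by
    refine ⟨?_⟩
    simp [hP]
  have intP : ∀ f : Fin k → ℝ, Integrable f P := fun f => Integrable.of_finite
  have valP : ∀ f : Fin k → ℝ, ∫ i, f i ∂P = ∑ i, pw i * f i := by
    intro f
    rw [hP, integral_finsetSum_measure]
    · refine Finset.sum_congr rfl fun i _ => ?_
      rw [integral_smul_measure, integral_dirac, ENNReal.toReal_ofReal (hpw i), smul_eq_mul]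
    · intro i _
      exact (integrable_dirac (by simp)).smul_measure (by simp)
  set δ : ℝ := if j = j' then 1 else 0 with hδ
  set u : Fin k → Fin d → ℝ := fun i l => w i l - a l with hu
  have key : ∀ ω : (Fin d → ℝ) × ℝ × Fin k,
      (1 / 2) *
            ((((∑ l, w ω.2.2 l * ω.1 l) + ω.2.1) - ∑ l, a l * ω.1 l) ^ 2 *
                (ω.1 j * ω.1 j') -
              (((∑ l, w ω.2.2 l * ω.1 l) + ω.2.1) - ∑ l, a l * ω.1 l) ^ 2 * δ)
      = (∑ l, ∑ m, (1 / 2 * (ω.1 l * ω.1 m * (ω.1 j * ω.1 j') - ω.1 l * ω.1 m * δ)) *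
            ((1:ℝ) * (u ω.2.2 l * u ω.2.2 m)))
        + (∑ l, (ω.1 l * (ω.1 j * ω.1 j') - ω.1 l * δ) * (ω.2.1 * u ω.2.2 l))
        + (1 / 2 * (ω.1 j * ω.1 j' - δ)) * (ω.2.1 ^ 2 * 1) := by
    rintro ⟨x, g, I⟩
    simp only
    have hs : ((∑ l, w I l * x l) + g) - ∑ l, a l * x l = (∑ l, u I l * x l) + g := by
      simp only [hu, sub_mul, Finset.sum_sub_distrib]; ring
    rw [hs]
    have h1 : (∑ l, ∑ m, (1 / 2 * (x l * x m * (x j * x j') - x l * x m * δ)) *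
            ((1:ℝ) * (u I l * u I m)))
        = 1 / 2 * (x j * x j' - δ) * ((∑ l, u I l * x l) * (∑ l, u I l * x l)) := by
      rw [Finset.sum_mul_sum, Finset.mul_sum]
      refine Finset.sum_congr rfl fun l _ => ?_
      rw [Finset.mul_sum]
      refine Finset.sum_congr rfl fun m _ => ?_
      ring
    have h2 : (∑ l, (x l * (x j * x j') - x l * δ) * (g * u I l))
        = (x j * x j' - δ) * g * (∑ l, u I l * x l) := by
      rw [Finset.mul_sum]
      refine Finset.sum_congr rfl fun l _ => ?_
      ring
    rw [h1, h2]; ring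
  have iA : ∀ l m, Integrable (fun ω : (Fin d → ℝ) × ℝ × Fin k =>
      (1 / 2 * (ω.1 l * ω.1 m * (ω.1 j * ω.1 j') - ω.1 l * ω.1 m * δ)) *
            ((1:ℝ) * (u ω.2.2 l * u ω.2.2 m))) (μ.prod (ν.prod P)) := by
    intro l m
    exact Integrable.mul_prod
      (f := fun x : Fin d → ℝ => (1 / 2 * (x l * x m * (x j * x j') - x l * x m * δ)))
      (g := fun q : ℝ × Fin k => (1:ℝ) * (u q.2 l * u q.2 m))
      (((aux_i4 l m j j').sub ((aux_i2 l m).mul_const δ)).const_mul _)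
      (Integrable.mul_prod (f := fun _ : ℝ => (1:ℝ)) (g := fun i => u i l * u i m)
        (integrable_const _) (intP _))
  have iB : ∀ l, Integrable (fun ω : (Fin d → ℝ) × ℝ × Fin k =>
      (ω.1 l * (ω.1 j * ω.1 j') - ω.1 l * δ) * (ω.2.1 * u ω.2.2 l)) (μ.prod (ν.prod P)) := by
    intro l
    exact Integrable.mul_prod
      (f := fun x : Fin d → ℝ => x l * (x j * x j') - x l * δ)
      (g := fun q : ℝ × Fin k => q.1 * u q.2 l)
      ((aux_i3 l j j').sub ((aux_i1 l).mul_const δ))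
      (Integrable.mul_prod (f := fun g : ℝ => g) (g := fun i => u i l)
        (by simpa using aux_integrable_pow v 1) (intP _))
  have iC : Integrable (fun ω : (Fin d → ℝ) × ℝ × Fin k =>
      (1 / 2 * (ω.1 j * ω.1 j' - δ)) * (ω.2.1 ^ 2 * 1)) (μ.prod (ν.prod P)) := by
    exact Integrable.mul_prod
      (f := fun x : Fin d → ℝ => 1 / 2 * (x j * x j' - δ))
      (g := fun q : ℝ × Fin k => q.1 ^ 2 * 1)
      (((aux_i2 j j').sub (integrable_const δ)).const_mul _)
      (Integrable.mul_prod (f := fun g : ℝ => g ^ 2) (g := fun _ => 1)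
        (aux_integrable_pow v 2) (intP _))
  have vA : ∀ l m, ∫ ω : (Fin d → ℝ) × ℝ × Fin k,
      (1 / 2 * (ω.1 l * ω.1 m * (ω.1 j * ω.1 j') - ω.1 l * ω.1 m * δ)) *
            ((1:ℝ) * (u ω.2.2 l * u ω.2.2 m)) ∂(μ.prod (ν.prod P))
      = 1 / 2 * ((if l = j then 1 else 0) * (if m = j' then 1 else 0)
      + (if l = j' then 1 else 0) * (if m = j then 1 else 0)) *
        ∑ i, pw i * (u i l * u i m) := by
    intro l m
    rw [integral_prod_mul
      (f := fun x : Fin d → ℝ => (1 / 2 * (x l * x m * (x j * x j') - x l * x m * δ)))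
      (g := fun q : ℝ × Fin k => (1:ℝ) * (u q.2 l * u q.2 m)),
      integral_prod_mul (f := fun _ : ℝ => (1:ℝ)) (g := fun i => u i l * u i m), valP,
      integral_const_mul, integral_sub (aux_i4 l m j j') ((aux_i2 l m).mul_const δ),
      integral_mul_const, aux_e4, aux_e2,
      show ∫ _ : ℝ, (1:ℝ) ∂ν = 1 by simp]
    rw [← hδ]
    ring
  have vB : ∀ l, ∫ ω : (Fin d → ℝ) × ℝ × Fin k,
      (ω.1 l * (ω.1 j * ω.1 j') - ω.1 l * δ) * (ω.2.1 * u ω.2.2 l) ∂(μ.prod (ν.prod P)) = 0 := by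
    intro l
    rw [integral_prod_mul
      (f := fun x : Fin d → ℝ => x l * (x j * x j') - x l * δ)
      (g := fun q : ℝ × Fin k => q.1 * u q.2 l),
      integral_prod_mul (f := fun g : ℝ => g) (g := fun i => u i l), hν, integral_id_gaussianReal]
    simp
  have vC : ∫ ω : (Fin d → ℝ) × ℝ × Fin k,
      (1 / 2 * (ω.1 j * ω.1 j' - δ)) * (ω.2.1 ^ 2 * 1) ∂(μ.prod (ν.prod P)) = 0 := by
    rw [integral_prod_mul
      (f := fun x : Fin d → ℝ => 1 / 2 * (x j * x j' - δ))
      (g := fun q : ℝ × Fin k => q.1 ^ 2 * 1),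
      integral_const_mul, integral_sub (aux_i2 j j') (integrable_const δ), aux_e2]
    simp [hδ]
  rw [integral_congr_ae (Filter.Eventually.of_forall key)]
  have iA' := fun l => integrable_finsetSum Finset.univ (fun m _ => iA l m)
  have iA'' := integrable_finsetSum Finset.univ (fun l _ => iA' l)
  have iB' := integrable_finsetSum Finset.univ (fun l _ => iB l)
  have iAB := iA''.add iB'
  simp only [Pi.add_def] at iAB
  rw [integral_add iAB iC, integral_add iA'' iB', vC,
    integral_finsetSum _ (fun l _ => iB l), integral_finsetSum _ (fun l _ => iA' l)]
  simp only [vB, integral_finsetSum Finset.univ (fun m _ => iA _ m), vA]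
  simp only [mul_add, add_mul, Finset.sum_add_distrib]
  simp
  simp only [hu, mul_comm (w _ j' - a j')]
  ring
end

section
/- Let ε ≥ 0, and let A, Â ∈ ℝ^{d×d} be positive semidefinite matrices of rank k with ‖A − Â‖_op ≤ ε. Suppose every nonzero eigenvalue of A is at least λ > 0. Let U ∈ ℝ^{d×k} and Û ∈ ℝ^{d×k} be matrices whose columns are orthonormal and span the range of A and of Â, respectively. Then for all unit vectors a, b ∈ ℝ^d lying in the column span of Û, one has ⟨Uᵀa, Uᵀb⟩ ≥ ⟨a, b⟩ − ε/λ. In particular, taking a = b, ‖Uᵀa‖₂² ≥ 1 − ε/λ. -/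
open MeasureTheory

/-- The Euclidean norm on `ℝ^n`. -/
noncomputable def e2norm {n : ℕ} (v : Fin n → ℝ) : ℝ := Real.sqrt (∑ i, v i ^ 2)

open Matrix in
lemma aux_e2sq {n : ℕ} (v : Fin n → ℝ) : e2norm v ^ 2 = v ⬝ᵥ v := by
  unfold e2norm
  rw [Real.sq_sqrt (Finset.sum_nonneg fun i _ => sq_nonneg _)]
  simp [dotProduct, sq]

open Matrix in
lemma aux_self_nonneg {n : ℕ} (v : Fin n → ℝ) : 0 ≤ v ⬝ᵥ v := by
  rw [← aux_e2sq]; positivity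

open Matrix in
lemma aux_cs {n : ℕ} (u v : Fin n → ℝ) : (u ⬝ᵥ v) ^ 2 ≤ (u ⬝ᵥ u) * (v ⬝ᵥ v) := by
  have := Finset.sum_mul_sq_le_sq_mul_sq Finset.univ u v
  simpa [dotProduct, sq] using this

open Matrix in
lemma aux_adj {n m : ℕ} (U : Matrix (Fin n) (Fin m) ℝ) (x : Fin n → ℝ) (u : Fin m → ℝ) :
    x ⬝ᵥ (U *ᵥ u) = (Uᵀ *ᵥ x) ⬝ᵥ u := by
  rw [Matrix.dotProduct_mulVec, Matrix.mulVec_transpose]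

open Matrix in
lemma aux_iso {n m : ℕ} (U : Matrix (Fin n) (Fin m) ℝ) (hU : Uᵀ * U = 1) (u v : Fin m → ℝ) :
    (U *ᵥ u) ⬝ᵥ (U *ᵥ v) = u ⬝ᵥ v := by
  rw [aux_adj, Matrix.mulVec_mulVec, hU, Matrix.one_mulVec]

open Matrix in
/-- distance to a point of the column span dominates the distance to the projection -/
lemma aux_proj {n m : ℕ} (U : Matrix (Fin n) (Fin m) ℝ) (hU : Uᵀ * U = 1) (x : Fin n → ℝ)
    (v : Fin m → ℝ) :
    x ⬝ᵥ x - (Uᵀ *ᵥ x) ⬝ᵥ (Uᵀ *ᵥ x) ≤ (x - U *ᵥ v) ⬝ᵥ (x - U *ᵥ v) := by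
  have h := aux_self_nonneg (Uᵀ *ᵥ x - v)
  simp only [sub_dotProduct, dotProduct_sub] at h ⊢
  rw [aux_iso U hU, dotProduct_comm (U *ᵥ v) x, aux_adj U x v]
  rw [dotProduct_comm v (Uᵀ *ᵥ x)] at h
  linarith

open Matrix in
lemma aux_gap {d : ℕ} {lam : ℝ} (hlam : 0 < lam) (A : Matrix (Fin d) (Fin d) ℝ)
    (hA : A.IsHermitian)
    (heig : ∀ i, hA.eigenvalues i ≠ 0 → lam ≤ hA.eigenvalues i) (z : Fin d → ℝ) :
    ∃ y, A *ᵥ y = A *ᵥ z ∧ lam ^ 2 * (y ⬝ᵥ y) ≤ (A *ᵥ z) ⬝ᵥ (A *ᵥ z) := by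
  obtain ⟨V, hV1, hV⟩ : ∃ V : Matrix (Fin d) (Fin d) ℝ, Vᵀ * V = 1 ∧
      A = V * Matrix.diagonal hA.eigenvalues * Vᵀ := by
    refine ⟨(hA.eigenvectorUnitary : Matrix (Fin d) (Fin d) ℝ), ?_, ?_⟩
    · have := (Matrix.mem_unitaryGroup_iff').1 hA.eigenvectorUnitary.2
      simpa [Matrix.star_eq_conjTranspose] using this
    · have := hA.spectral_theorem
      rw [Unitary.conjStarAlgAut_apply] at this
      simpa [Matrix.star_eq_conjTranspose, Function.comp_def] using this
  set μ := hA.eigenvalues with hμ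
  let e : Fin d → ℝ := fun i => if μ i = 0 then 0 else (Vᵀ *ᵥ z) i
  have hAe : A *ᵥ (V *ᵥ e) = V *ᵥ (Matrix.diagonal μ *ᵥ e) := by
    rw [hV, Matrix.mulVec_mulVec, Matrix.mulVec_mulVec, Matrix.mul_assoc, hV1, Matrix.mul_one]
  have hde : Matrix.diagonal μ *ᵥ e = Matrix.diagonal μ *ᵥ (Vᵀ *ᵥ z) := by
    ext i
    simp only [Matrix.mulVec_diagonal, e]
    split_ifs with h <;> simp [h]
  have hAz : A *ᵥ (V *ᵥ e) = A *ᵥ z := by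
    rw [hAe, hde, hV]
    simp only [Matrix.mulVec_mulVec, Matrix.mul_assoc]
  refine ⟨V *ᵥ e, hAz, ?_⟩
  rw [← hAz, hAe, aux_iso V hV1, aux_iso V hV1]
  simp only [dotProduct, Finset.mul_sum, Matrix.mulVec_diagonal]
  refine Finset.sum_le_sum fun i _ => ?_
  by_cases h : μ i = 0
  · simp [e, h]
  · have h1 : lam ^ 2 ≤ μ i ^ 2 := pow_le_pow_left₀ hlam.le (heig i h) 2
    nlinarith [mul_le_mul_of_nonneg_right h1 (mul_self_nonneg (e i))]

open Matrix in
/-- a lower bound on a square matrix transfers to the transpose -/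
lemma aux_transpose {k : ℕ} (M : Matrix (Fin k) (Fin k) ℝ) {c : ℝ} (hc : 0 < c)
    (h : ∀ u, c * (u ⬝ᵥ u) ≤ (M *ᵥ u) ⬝ᵥ (M *ᵥ u)) (w : Fin k → ℝ) :
    c * (w ⬝ᵥ w) ≤ (Mᵀ *ᵥ w) ⬝ᵥ (Mᵀ *ᵥ w) := by
  have hinj : Function.Injective M.mulVecLin := by
    rw [← LinearMap.ker_eq_bot, LinearMap.ker_eq_bot']
    intro u hu
    have := h u
    rw [Matrix.mulVecLin_apply] at hu
    rw [hu] at this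
    simp only [zero_dotProduct] at this
    exact dotProduct_self_eq_zero.1
      (le_antisymm (by nlinarith [aux_self_nonneg u]) (aux_self_nonneg u))
  obtain ⟨u, hu⟩ := LinearMap.injective_iff_surjective.1 hinj w
  rw [Matrix.mulVecLin_apply] at hu
  have h1 := h u
  have h2 := aux_cs (Mᵀ *ᵥ w) u
  rw [← aux_adj, hu] at h2
  rw [hu] at h1
  have hT := aux_self_nonneg (Mᵀ *ᵥ w)
  rcases (aux_self_nonneg w).eq_or_lt with h0 | h0
  · rw [← h0]; simpa using hT
  · have h3 := mul_le_mul_of_nonneg_left h1 hT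
    have h4 := mul_le_mul_of_nonneg_left h2 hc.le
    by_contra hcon
    push Not at hcon
    have := mul_lt_mul_of_pos_right hcon h0
    nlinarith

/-- Wedin-type angle lemma: if `A, Â` are rank-`k` psd matrices with `‖A − Â‖_op ≤ ε`
(i.e. `‖(A − Â)x‖ ≤ ε‖x‖` for all `x`), every nonzero eigenvalue of `A` is at least `λ`,
and `U, Û` have orthonormal columns spanning the ranges of `A, Â` respectively, then for
all unit vectors `a, b` in the column span of `Û`, `⟨Uᵀa, Uᵀb⟩ ≥ ⟨a,b⟩ − ε/λ`; in
particular `‖Uᵀa‖² ≥ 1 − ε/λ`. -/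
theorem stmt9 (d k : ℕ) (ε lam : ℝ) (hε : 0 ≤ ε) (hlam : 0 < lam)
    (A Ahat : Matrix (Fin d) (Fin d) ℝ)
    (hA : A.PosSemidef) (hAhat : Ahat.PosSemidef)
    (hrankA : A.rank = k) (hrankAhat : Ahat.rank = k)
    (hop : ∀ x : Fin d → ℝ, e2norm ((A - Ahat).mulVec x) ≤ ε * e2norm x)
    (heig : ∀ i, hA.isHermitian.eigenvalues i ≠ 0 → lam ≤ hA.isHermitian.eigenvalues i)
    (U Uhat : Matrix (Fin d) (Fin k) ℝ)
    (hU : U.transpose * U = 1) (hUhat : Uhat.transpose * Uhat = 1)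
    (hUspan : Set.range U.mulVec = Set.range A.mulVec)
    (hUhatspan : Set.range Uhat.mulVec = Set.range Ahat.mulVec) :
    (∀ a b : Fin d → ℝ, e2norm a = 1 → e2norm b = 1 →
      a ∈ Set.range Uhat.mulVec → b ∈ Set.range Uhat.mulVec →
      (∑ i, a i * b i) - ε / lam ≤ ∑ j, U.transpose.mulVec a j * U.transpose.mulVec b j) ∧
    (∀ a : Fin d → ℝ, e2norm a = 1 → a ∈ Set.range Uhat.mulVec →
      1 - ε / lam ≤ e2norm (U.transpose.mulVec a) ^ 2) := by
  open Matrix in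
    have hs : 0 ≤ ε / lam := div_nonneg hε hlam.le
    have key : ∀ a : Fin d → ℝ, a ⬝ᵥ a = 1 → a ∈ Set.range Uhat.mulVec →
        1 - ε / lam ≤ (Uᵀ *ᵥ a) ⬝ᵥ (Uᵀ *ᵥ a) := by
      rintro a ha ⟨w, rfl⟩
      rcases le_or_gt 1 (ε / lam) with h1 | h1
      · linarith [aux_self_nonneg (Uᵀ *ᵥ (Uhat *ᵥ w))]
      have hM : ∀ u, (1 - (ε / lam) ^ 2) * (u ⬝ᵥ u) ≤
          ((Uhatᵀ * U) *ᵥ u) ⬝ᵥ ((Uhatᵀ * U) *ᵥ u) := by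
        intro u
        obtain ⟨z, hz⟩ : U *ᵥ u ∈ Set.range A.mulVec := hUspan ▸ ⟨u, rfl⟩
        obtain ⟨y, hy1, hy2⟩ := aux_gap hlam A hA.isHermitian heig z
        obtain ⟨v, hv⟩ : Ahat *ᵥ y ∈ Set.range Uhat.mulVec := hUhatspan ▸ ⟨y, rfl⟩
        have hp := aux_proj Uhat hUhat (U *ᵥ u) v
        change A *ᵥ z = U *ᵥ u at hz
        change Uhat *ᵥ v = Ahat *ᵥ y at hv
        have ho : e2norm ((A - Ahat) *ᵥ y) ^ 2 ≤ (ε * e2norm y) ^ 2 :=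
          pow_le_pow_left₀ (Real.sqrt_nonneg _) (hop y) 2
        rw [mul_pow, aux_e2sq, aux_e2sq, Matrix.sub_mulVec, hy1, hz, ← hv] at ho
        rw [hz, aux_iso U hU] at hy2
        rw [aux_iso U hU, Matrix.mulVec_mulVec] at hp
        have h5 : ε ^ 2 * (y ⬝ᵥ y) ≤ (ε / lam) ^ 2 * (u ⬝ᵥ u) := by
          calc ε ^ 2 * (y ⬝ᵥ y) = (ε / lam) ^ 2 * (lam ^ 2 * (y ⬝ᵥ y)) := by field_simp
            _ ≤ _ := mul_le_mul_of_nonneg_left hy2 (sq_nonneg _)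
        linarith
      have hc : 0 < 1 - (ε / lam) ^ 2 := by nlinarith
      have h2 := aux_transpose (Uhatᵀ * U) hc hM w
      rw [aux_iso Uhat hUhat] at ha
      rw [ha, Matrix.transpose_mul, Matrix.transpose_transpose] at h2
      rw [Matrix.mulVec_mulVec]
      nlinarith
    have hn : ∀ a : Fin d → ℝ, e2norm a = 1 → a ⬝ᵥ a = 1 := by
      intro a ha
      rw [← aux_e2sq, ha, one_pow]
    refine ⟨fun a b ha hb har hbr => ?_, fun a ha har => ?_⟩
    · have ka := key a (hn a ha) har
      have kb := key b (hn b hb) hbr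
      change a ⬝ᵥ b - ε / lam ≤ (Uᵀ *ᵥ a) ⬝ᵥ (Uᵀ *ᵥ b)
      have hp := aux_self_nonneg ((a - b) - U *ᵥ (Uᵀ *ᵥ (a - b)))
      have e : ((a - b) - U *ᵥ (Uᵀ *ᵥ (a - b))) ⬝ᵥ ((a - b) - U *ᵥ (Uᵀ *ᵥ (a - b))) =
          (a - b) ⬝ᵥ (a - b) - (Uᵀ *ᵥ (a - b)) ⬝ᵥ (Uᵀ *ᵥ (a - b)) := by
        generalize a - b = x
        simp only [sub_dotProduct, dotProduct_sub]
        rw [aux_iso U hU, dotProduct_comm (U *ᵥ _) x, aux_adj U x]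
        ring
      rw [e, Matrix.mulVec_sub] at hp
      simp only [sub_dotProduct, dotProduct_sub] at hp
      rw [dotProduct_comm b a, dotProduct_comm (Uᵀ *ᵥ b) (Uᵀ *ᵥ a), hn a ha, hn b hb] at hp
      linarith
    · rw [aux_e2sq]
      exact key a (hn a ha) har
end

section
/- For every integer k ≥ 1 there exist positive reals σ₁,…,σ_k and σ'₁,…,σ'_k such that: (1) there is some i ∈ [k] with |σ_i − σ'_j| ≥ 1/(2√k) for every j ∈ [k]; (2) |σ_i − σ_j| > 1/2 and |σ'_i − σ'_j| > 1/2 for all i ≠ j; (3) σ_i ∈ [1/2, k+1] and σ'_i ∈ [1/2, k+1] for all i; and (4) ∑_{i=1}^k σ_i^{2ℓ} = ∑_{i=1}^k (σ'_i)^{2ℓ} for every ℓ = 1,…,k−1. Consequently the uniform mixtures (1/k)∑_{i=1}^k N(0,σ_i²) and (1/k)∑_{i=1}^k N(0,(σ'_i)²) have identical moments of every degree at most 2k−1. -/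
open MeasureTheory ProbabilityTheory

lemma aux_moment_one (c : ℝ) (s : ℕ) :
    ∫ z : ℝ, z ^ s ∂(gaussianReal 0 ⟨c ^ 2, sq_nonneg c⟩)
      = c ^ s * ∫ z : ℝ, z ^ s ∂(gaussianReal 0 1) := by
  have h := gaussianReal_map_const_mul (μ := 0) (v := 1) c
  rw [mul_zero, mul_one] at h
  have h2 : gaussianReal 0 ⟨c ^ 2, sq_nonneg c⟩ = (gaussianReal 0 1).map (c * ·) := h.symm
  rw [h2, integral_map (by fun_prop) (by fun_prop), ← integral_const_mul]
  simp only [mul_pow]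

lemma aux_moment_odd (s : ℕ) (hs : Odd s) : ∫ z : ℝ, z ^ s ∂(gaussianReal 0 1) = 0 := by
  have h := gaussianReal_map_neg (μ := 0) (v := 1)
  rw [neg_zero] at h
  have h2 : ∫ z : ℝ, z ^ s ∂(gaussianReal 0 1) = - ∫ z : ℝ, z ^ s ∂(gaussianReal 0 1) := by
    conv_lhs => rw [← h]
    rw [integral_map (by fun_prop) (by fun_prop), ← integral_neg]
    simp only [hs.neg_pow]
  linarith

lemma aux_integrable (v : NNReal) (s : ℕ) :
    Integrable (fun z : ℝ => z ^ s) (gaussianReal 0 v) := by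
  have h := (memLp_id_gaussianReal (μ := 0) (v := v) (s : NNReal))
  have h2 := MemLp.integrable_norm_pow' (p := s) (by simpa using h)
  refine h2.mono (by fun_prop) ?_
  filter_upwards with z
  simp

lemma aux_mix (k : ℕ) (hk : 1 ≤ k) (w : Fin k → NNReal) (s : ℕ) :
    ∫ z : ℝ, z ^ s ∂(∑ i : Fin k, (k : ENNReal)⁻¹ • gaussianReal 0 (w i))
      = (k : ENNReal)⁻¹.toReal • ∑ i, ∫ z : ℝ, z ^ s ∂(gaussianReal 0 (w i)) := by
  have hk0 : (k : ENNReal)⁻¹ ≠ ⊤ := by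
    rw [ENNReal.inv_ne_top]
    exact_mod_cast (by omega : k ≠ 0)
  rw [integral_finsetSum_measure (fun i _ => (aux_integrable _ s).smul_measure hk0)]
  simp only [integral_smul_measure]
  rw [← Finset.smul_sum]

lemma aux_moments (k : ℕ) (hk : 1 ≤ k) (σ σ' : Fin k → ℝ)
    (h : ∀ ℓ : ℕ, 1 ≤ ℓ → ℓ ≤ k - 1 → (∑ i, σ i ^ (2 * ℓ)) = ∑ i, σ' i ^ (2 * ℓ))
    (s : ℕ) (hs : s ≤ 2 * k - 1) :
    (∫ z : ℝ, z ^ s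
            ∂(∑ i : Fin k, (k : ENNReal)⁻¹ • gaussianReal 0 ⟨σ i ^ 2, sq_nonneg (σ i)⟩))
          = ∫ z : ℝ, z ^ s
            ∂(∑ i : Fin k, (k : ENNReal)⁻¹ • gaussianReal 0 ⟨σ' i ^ 2, sq_nonneg (σ' i)⟩) := by
  refine (aux_mix k hk (fun i => ⟨σ i ^ 2, sq_nonneg (σ i)⟩) s).trans
    (Eq.trans ?_ (aux_mix k hk (fun i => ⟨σ' i ^ 2, sq_nonneg (σ' i)⟩) s).symm)
  congr 1
  refine (Finset.sum_congr rfl fun i _ => aux_moment_one (σ i) s).trans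
    (Eq.trans ?_ (Finset.sum_congr rfl fun i _ => aux_moment_one (σ' i) s).symm)
  rw [← Finset.sum_mul, ← Finset.sum_mul]
  rcases Nat.even_or_odd' s with ⟨ℓ, rfl | rfl⟩
  · rcases Nat.eq_zero_or_pos ℓ with rfl | hl
    · simp
    · rw [h ℓ hl (by omega)]
  · rw [aux_moment_odd _ ⟨ℓ, rfl⟩]
    simp

lemma aux_psum (k : ℕ) (u v : Fin k → ℝ) (hv : Function.Injective v) (c : ℝ)
    (h : ∀ i, ∏ j, (v i - u j) = c) (ℓ : ℕ) (h1 : 1 ≤ ℓ) (h2 : ℓ < k) :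
    ∑ i, u i ^ ℓ = ∑ i, v i ^ ℓ := by
  have hpoly : (∏ j, (Polynomial.X - Polynomial.C (u j)))
      = (∏ j, (Polynomial.X - Polynomial.C (v j))) + Polynomial.C c := by
    have hdu : (∏ j, (Polynomial.X - Polynomial.C (u j))).degree = (k : WithBot ℕ) := by
      simp [Polynomial.degree_prod]
    have hdv : (∏ j, (Polynomial.X - Polynomial.C (v j))).degree = (k : WithBot ℕ) := by
      simp [Polynomial.degree_prod]
    have hmu : (∏ j, (Polynomial.X - Polynomial.C (u j))).Monic :=
      Polynomial.monic_prod_X_sub_C _ _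
    have hmv : (∏ j, (Polynomial.X - Polynomial.C (v j))).Monic :=
      Polynomial.monic_prod_X_sub_C _ _
    have hc : (Polynomial.C c).degree < (∏ j, (Polynomial.X - Polynomial.C (v j))).degree := by
      rw [hdv]
      refine lt_of_le_of_lt Polynomial.degree_C_le ?_
      exact_mod_cast (by omega : 0 < k)
    refine Polynomial.eq_of_degree_le_of_eval_index_eq (v := v) Finset.univ hv.injOn ?_ ?_ ?_ ?_
    · rw [hdu]; simp
    · rw [Polynomial.degree_add_eq_left_of_degree_lt hc, hdu, hdv]
    · rw [hmu.leadingCoeff, Polynomial.leadingCoeff_add_of_degree_lt' hc, hmv.leadingCoeff]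
    · intro i _
      rw [Polynomial.eval_add, Polynomial.eval_prod, Polynomial.eval_prod]
      simp only [Polynomial.eval_sub, Polynomial.eval_X, Polynomial.eval_C]
      rw [h i, Finset.prod_eq_zero (Finset.mem_univ i) (sub_self _), zero_add]
  have hes : ∀ n, n < k → MvPolynomial.aeval u (MvPolynomial.esymm (Fin k) ℝ n)
      = MvPolynomial.aeval v (MvPolynomial.esymm (Fin k) ℝ n) := by
    intro n hn
    rw [MvPolynomial.aeval_esymm_eq_multiset_esymm, MvPolynomial.aeval_esymm_eq_multiset_esymm]
    have key := congrArg (fun p => Polynomial.coeff p (k - n)) hpoly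
    simp only [Polynomial.coeff_add, Polynomial.coeff_C, if_neg (by omega : k - n ≠ 0),
      add_zero] at key
    have hu := Multiset.prod_X_sub_C_coeff (Finset.univ.val.map u) (k := k - n) (by simp)
    have hv := Multiset.prod_X_sub_C_coeff (Finset.univ.val.map v) (k := k - n) (by simp)
    rw [Multiset.map_map] at hu hv
    have key2 := hu.symm.trans (key.trans hv)
    have hcard : ∀ w : Fin k → ℝ, Multiset.card (Finset.univ.val.map w) - (k - n) = n := by
      intro w; simp; omega
    rw [hcard, hcard] at key2
    exact mul_left_cancel₀ (pow_ne_zero _ (by norm_num)) key2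
  have hps : ∀ n, 1 ≤ n → n < k → MvPolynomial.aeval u (MvPolynomial.psum (Fin k) ℝ n)
      = MvPolynomial.aeval v (MvPolynomial.psum (Fin k) ℝ n) := by
    intro n
    induction n using Nat.strong_induction_on with
    | _ n ih =>
      intro hn1 hn2
      rw [MvPolynomial.psum_eq_mul_esymm_sub_sum _ _ n hn1]
      simp only [map_sub, map_mul, map_pow, map_neg, map_one, map_natCast, map_sum]
      rw [hes n hn2]
      congr 1
      refine Finset.sum_congr rfl ?_
      rintro ⟨a, b⟩ hab
      simp only [Finset.mem_filter, Finset.HasAntidiagonal.mem_antidiagonal, Set.mem_Ioo] at hab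
      dsimp only
      rw [hes a (by omega), ih b (by omega) (by omega) (by omega)]
  have := hps ℓ h1 h2
  simpa [MvPolynomial.psum] using this

/-- The even polynomial with zeros at the half-integers of absolute value below `k`. -/
noncomputable def auxP (k : ℕ) (t : ℝ) : ℝ := ∏ j ∈ Finset.range k, (t ^ 2 - ((j : ℝ) + 1 / 2) ^ 2)

lemma auxP_step (k : ℕ) (t : ℝ) :
    (t - k + 1 / 2) * auxP k (t + 1) = (t + k + 1 / 2) * auxP k t := by
  induction k with
  | zero => simp [auxP]
  | succ k ih =>
    have e : ∀ x, auxP (k + 1) x = auxP k x * (x ^ 2 - ((k : ℝ) + 1 / 2) ^ 2) := fun x => by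
      simp [auxP, Finset.prod_range_succ]
    rw [e, e]
    push_cast
    linear_combination (t - k - 1 / 2) * (t + k + 3 / 2) * ih

lemma auxP_step2 (k : ℕ) (t : ℝ) :
    (k - t - 1 / 2) * (k - t - 3 / 2) * auxP k (t + 2)
      = (k + t + 1 / 2) * (k + t + 3 / 2) * auxP k t := by
  have h1 := auxP_step k t
  have h2 := auxP_step k (t + 1)
  rw [show t + 1 + 1 = t + 2 by ring] at h2
  linear_combination (t - k + 1 / 2) * h2 + (t + k + 3 / 2) * h1

lemma auxP_zero (k i : ℕ) (hi : i < k) : auxP k (i + 1 / 2) = 0 :=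
  Finset.prod_eq_zero (Finset.mem_range.mpr hi) (sub_self _)

lemma auxP_ne (k : ℕ) : auxP k (3 / 4) ≠ 0 := by
  refine Finset.prod_ne_zero_iff.mpr fun j _ => ?_
  rcases Nat.eq_zero_or_pos j with rfl | hj
  · norm_num
  · have : (1 : ℝ) ≤ j := by exact_mod_cast hj
    intro h
    nlinarith

lemma auxP_neg (k : ℕ) (t : ℝ) : auxP k (-t) = auxP k t := by simp [auxP]

lemma auxP_cont (k : ℕ) : Continuous (auxP k) := by
  unfold auxP
  fun_prop

noncomputable def auxF (k : ℕ) (t : ℝ) : ℝ := auxP k t / auxP k (3 / 4)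

lemma auxF_lt (k : ℕ) (t : ℝ) (h1 : -1 < t) (h2 : t + 3 / 2 < k) (h3 : 1 ≤ auxF k t) :
    1 < auxF k (t + 2) := by
  have hk : (0 : ℝ) < k := by linarith
  have h := auxP_step2 k t
  have h' : (k - t - 1 / 2) * (k - t - 3 / 2) * auxF k (t + 2)
      = (k + t + 1 / 2) * (k + t + 3 / 2) * auxF k t := by
    unfold auxF
    rw [← mul_div_assoc, ← mul_div_assoc, h]
  have hA : 0 < (k - t - 1 / 2) * (k - t - 3 / 2) := mul_pos (by linarith) (by linarith)
  have hB : (k - t - 1 / 2) * (k - t - 3 / 2) < (k + t + 1 / 2) * (k + t + 3 / 2) := by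
    nlinarith [mul_pos hk (by linarith : 0 < t + 1)]
  refine lt_of_mul_lt_mul_left ?_ hA.le
  rw [h']
  nlinarith

lemma auxF_iter (k : ℕ) (x : ℝ) (h1 : -1 < x) (hx : auxF k x = 1) (m : ℕ)
    (hm : x + 2 * m + 3 / 2 < k) : 1 < auxF k (x + 2 * m + 2) := by
  induction m with
  | zero =>
    refine auxF_lt k _ (by simpa using h1) hm ?_
    simp [hx]
  | succ m ih =>
    push_cast at hm ⊢
    have hm0 : (0 : ℝ) ≤ m := Nat.cast_nonneg m
    have := ih (by linarith)
    refine auxF_lt k _ (by linarith) hm ?_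
    rw [show x + 2 * ((m : ℝ) + 1) = x + 2 * m + 2 by ring]
    exact this.le

lemma auxF_root (k i : ℕ) (hi : i < k) : ∃ y : ℝ, auxF k y = 1 ∧ |y - (i + 1 / 2)| ≤ 1 / 4 ∧
    (1 ≤ i → |y - (i + 1 / 2)| < 1 / 4) ∧ (i = 0 → y = 3 / 4) := by
  have hc : Continuous (auxF k) := (auxP_cont k).div_const _
  have h34 : auxF k (3 / 4) = 1 := div_self (auxP_ne k)
  have h34' : auxF k (-(3 / 4)) = 1 := by
    unfold auxF
    rw [auxP_neg]
    exact h34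
  have h0 : auxF k (i + 1 / 2) = 0 := by simp only [auxF, auxP_zero k i hi, zero_div]
  rcases Nat.eq_zero_or_pos i with rfl | hpos
  · exact ⟨3 / 4, h34, by norm_num [abs_le], by simp, fun _ => rfl⟩
  rcases Nat.even_or_odd' i with ⟨m, rfl | rfl⟩
  · obtain ⟨n, rfl⟩ : ∃ n, m = n + 1 := ⟨m - 1, by omega⟩
    have hik : 2 * ((n : ℝ) + 1) + 1 ≤ k := by exact_mod_cast hi
    have := auxF_iter k (3 / 4) (by norm_num) h34 n (by linarith)
    rw [show 3 / 4 + 2 * (n : ℝ) + 2 = ((2 * (n + 1) : ℕ) : ℝ) + 3 / 4 by push_cast; ring] at this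
    obtain ⟨y, hy, hy1⟩ := intermediate_value_Icc
      (by linarith : ((2 * (n + 1) : ℕ) : ℝ) + 1 / 2 ≤ ((2 * (n + 1) : ℕ) : ℝ) + 3 / 4)
      hc.continuousOn (⟨by rw [h0]; norm_num, this.le⟩ : (1 : ℝ) ∈ Set.Icc _ _)
    have hne : y ≠ ((2 * (n + 1) : ℕ) : ℝ) + 3 / 4 := by
      rintro rfl
      linarith
    have hlt := lt_of_le_of_ne hy.2 hne
    have hlt2 := hy.1
    have : |y - (((2 * (n + 1) : ℕ) : ℝ) + 1 / 2)| < 1 / 4 := by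
      rw [abs_lt]; constructor <;> linarith
    exact ⟨y, hy1, this.le, fun _ => this, by omega⟩
  · have hik : 2 * (m : ℝ) + 1 + 1 ≤ k := by exact_mod_cast hi
    have := auxF_iter k (-(3 / 4)) (by norm_num) h34' m (by linarith)
    rw [show -(3 / 4) + 2 * (m : ℝ) + 2 = ((2 * m + 1 : ℕ) : ℝ) + 1 / 4 by push_cast; ring] at this
    obtain ⟨y, hy, hy1⟩ := intermediate_value_Icc'
      (by linarith : ((2 * m + 1 : ℕ) : ℝ) + 1 / 4 ≤ ((2 * m + 1 : ℕ) : ℝ) + 1 / 2)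
      hc.continuousOn (⟨by rw [h0]; norm_num, this.le⟩ : (1 : ℝ) ∈ Set.Icc _ _)
    have hne : y ≠ ((2 * m + 1 : ℕ) : ℝ) + 1 / 4 := by
      rintro rfl
      linarith
    have hlt := lt_of_le_of_ne hy.1 hne.symm
    have hlt2 := hy.2
    have : |y - (((2 * m + 1 : ℕ) : ℝ) + 1 / 2)| < 1 / 4 := by
      rw [abs_lt]; constructor <;> linarith
    exact ⟨y, hy1, this.le, fun _ => this, by omega⟩

lemma aux_main (k : ℕ) (hk : 1 ≤ k) :
    ∃ σ σ' : Fin k → ℝ,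
      (∃ i, ∀ j, 1 / (2 * Real.sqrt k) ≤ |σ i - σ' j|) ∧
      (∀ i j, i ≠ j → 1 / 2 < |σ i - σ j|) ∧
      (∀ i j, i ≠ j → 1 / 2 < |σ' i - σ' j|) ∧
      (∀ i, σ i ∈ Set.Icc (1 / 2 : ℝ) ((k : ℝ) + 1)) ∧
      (∀ i, σ' i ∈ Set.Icc (1 / 2 : ℝ) ((k : ℝ) + 1)) ∧
      (∀ ℓ : ℕ, 1 ≤ ℓ → ℓ ≤ k - 1 → (∑ i, σ i ^ (2 * ℓ)) = ∑ i, σ' i ^ (2 * ℓ)) := by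
  have hsq : 1 / (2 * Real.sqrt k) ≤ 1 / 2 := by
    have : 1 ≤ Real.sqrt k := by
      rw [Real.one_le_sqrt]
      exact_mod_cast hk
    rw [div_le_div_iff₀ (by positivity) (by norm_num)]
    linarith
  rcases (by omega : k = 1 ∨ k = 2 ∨ k = 3 ∨ 4 ≤ k) with rfl | rfl | rfl | hk4
  · refine ⟨![1], ![2], ⟨0, fun j => hsq.trans ?_⟩, ?_, ?_, ?_, ?_, ?_⟩
    · fin_cases j; norm_num
    · intro i j hij; exact absurd (Subsingleton.elim i j) hij
    · intro i j hij; exact absurd (Subsingleton.elim i j) hij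
    · intro i; fin_cases i; norm_num
    · intro i; fin_cases i; norm_num
    · intro l h1 h2; omega
  · refine ⟨![1 / 2, 11 / 4], ![5 / 4, 5 / 2], ⟨0, fun j => hsq.trans ?_⟩, ?_, ?_, ?_, ?_, ?_⟩
    · fin_cases j <;> norm_num [abs_of_pos, abs_of_neg]
    · intro i j hij; fin_cases i <;> fin_cases j <;> first | exact absurd rfl hij | norm_num [lt_abs]
    · intro i j hij; fin_cases i <;> fin_cases j <;> first | exact absurd rfl hij | norm_num [lt_abs]
    · intro i; fin_cases i <;> norm_num
    · intro i; fin_cases i <;> norm_num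
    · intro l h1 h2
      obtain rfl : l = 1 := by omega
      norm_num [Fin.sum_univ_succ]
  · refine ⟨![6 / 9, 28 / 9, 34 / 9], ![14 / 9, 22 / 9, 4],
      ⟨0, fun j => hsq.trans ?_⟩, ?_, ?_, ?_, ?_, ?_⟩
    · fin_cases j <;> norm_num [le_abs]
    · intro i j hij; fin_cases i <;> fin_cases j <;> first | exact absurd rfl hij | norm_num [lt_abs]
    · intro i j hij; fin_cases i <;> fin_cases j <;> first | exact absurd rfl hij | norm_num [lt_abs]
    · intro i; fin_cases i <;> norm_num
    · intro i; fin_cases i <;> norm_num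
    · intro l h1 h2
      rcases (by omega : l = 1 ∨ l = 2) with rfl | rfl <;> norm_num [Fin.sum_univ_succ]
  have hsq4 : 1 / (2 * Real.sqrt k) ≤ 1 / 4 := by
    have : 2 ≤ Real.sqrt k := by
      refine Real.le_sqrt_of_sq_le ?_
      have : (4 : ℝ) ≤ k := by exact_mod_cast hk4
      linarith
    rw [div_le_div_iff₀ (by positivity) (by norm_num)]
    linarith
  choose y hy1 hy2 hy3 hy4 using fun i : Fin k => auxF_root k i i.isLt
  have hone : ∀ i : Fin k, (i : ℕ) ≠ 0 → (1 : ℝ) ≤ (i : ℕ) := by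
    intro i hi
    exact_mod_cast Nat.one_le_iff_ne_zero.mpr hi
  have hlow : ∀ i : Fin k, 3 / 4 ≤ y i := by
    intro i
    by_cases h : (i : ℕ) = 0
    · rw [hy4 i h]
    · have := (abs_le.mp (hy2 i)).1
      linarith [hone i h]
  have hup : ∀ i : Fin k, ((i : ℕ) : ℝ) + 1 ≤ k := fun i => by exact_mod_cast i.isLt
  have hlt : ∀ i j : Fin k, i < j → 1 / 2 < y j - y i := by
    intro i j hij
    have hij' : ((i : ℕ) : ℝ) + 1 ≤ (j : ℕ) := by exact_mod_cast hij
    have h1 := (abs_le.mp (hy2 i)).2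
    have hj0 : 1 ≤ (j : ℕ) := by
      have : (i : ℕ) < (j : ℕ) := hij
      omega
    have h2 := (abs_lt.mp (hy3 j hj0)).1
    linarith
  have hsep : ∀ i j, i ≠ j → 1 / 2 < |y i - y j| := by
    intro i j hij
    rcases lt_or_gt_of_ne hij with h | h
    · rw [abs_sub_comm]
      exact (hlt i j h).trans_le (le_abs_self _)
    · exact (hlt j i h).trans_le (le_abs_self _)
  refine ⟨fun i => (i : ℕ) + 1 / 2, y, ⟨⟨0, by omega⟩, fun j => hsq4.trans ?_⟩, ?_, hsep, ?_, ?_, ?_⟩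
  · rw [abs_sub_comm]
    refine le_trans ?_ (le_abs_self _)
    have := hlow j
    simp only [Nat.cast_zero]
    linarith
  · have : ∀ i j : Fin k, i < j →
        1 / 2 < (((j : ℕ) : ℝ) + 1 / 2) - (((i : ℕ) : ℝ) + 1 / 2) := by
      intro i j hij
      have hij' : ((i : ℕ) : ℝ) + 1 ≤ (j : ℕ) := by exact_mod_cast hij
      linarith
    intro i j hij
    rcases lt_or_gt_of_ne hij with h | h
    · rw [abs_sub_comm]
      exact (this i j h).trans_le (le_abs_self _)
    · exact (this j i h).trans_le (le_abs_self _)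
  · intro i
    have h0 : (0 : ℝ) ≤ (i : ℕ) := Nat.cast_nonneg _
    have := hup i
    constructor <;> dsimp only <;> linarith
  · intro i
    have := hup i
    have h1 := (abs_le.mp (hy2 i)).2
    constructor <;> linarith [hlow i]
  · intro l h1 h2
    simp only [pow_mul]
    refine aux_psum k (fun i => (((i : ℕ) : ℝ) + 1 / 2) ^ 2) (fun i => y i ^ 2) ?_
      (auxP k (3 / 4)) ?_ l h1 (by omega)
    · intro i j hij
      by_contra hne
      have h := hsep i j hne
      have e : y i = y j := by
        have hi := hlow i
        have hj := hlow j
        exact (pow_left_inj₀ (by linarith) (by linarith) (by norm_num)).mp hij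
      rw [e] at h
      norm_num at h
    · intro i
      have h := hy1 i
      unfold auxF at h
      rw [div_eq_one_iff_eq (auxP_ne k)] at h
      rw [← h, auxP, Finset.prod_range]

/-- Moment-matching construction: for every `k ≥ 1` there are standard deviations
`σ, σ'` with (1) some `σ_i` at distance at least `1/(2√k)` from every `σ'_j`;
(2) pairwise separation `> 1/2` within each family; (3) all values in `[1/2, k+1]`;
(4) matching power sums `∑ σᵢ^(2ℓ) = ∑ (σ'ᵢ)^(2ℓ)` for `1 ≤ ℓ ≤ k−1`; and consequently
the two uniform Gaussian mixtures agree on all moments of degree at most `2k−1`. -/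
theorem stmt12 (k : ℕ) (hk : 1 ≤ k) :
    ∃ σ σ' : Fin k → ℝ,
      (∀ i, 0 < σ i) ∧ (∀ i, 0 < σ' i) ∧
      (∃ i, ∀ j, 1 / (2 * Real.sqrt k) ≤ |σ i - σ' j|) ∧
      (∀ i j, i ≠ j → 1 / 2 < |σ i - σ j|) ∧
      (∀ i j, i ≠ j → 1 / 2 < |σ' i - σ' j|) ∧
      (∀ i, σ i ∈ Set.Icc (1 / 2 : ℝ) ((k : ℝ) + 1)) ∧
      (∀ i, σ' i ∈ Set.Icc (1 / 2 : ℝ) ((k : ℝ) + 1)) ∧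
      (∀ ℓ : ℕ, 1 ≤ ℓ → ℓ ≤ k - 1 → (∑ i, σ i ^ (2 * ℓ)) = ∑ i, σ' i ^ (2 * ℓ)) ∧
      (∀ s : ℕ, s ≤ 2 * k - 1 →
        (∫ z : ℝ, z ^ s
            ∂(∑ i : Fin k, (k : ENNReal)⁻¹ • gaussianReal 0 ⟨σ i ^ 2, sq_nonneg (σ i)⟩))
          = ∫ z : ℝ, z ^ s
            ∂(∑ i : Fin k, (k : ENNReal)⁻¹ • gaussianReal 0 ⟨σ' i ^ 2, sq_nonneg (σ' i)⟩)) := by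
  obtain ⟨σ, σ', h1, h2, h3, h4, h5, h6⟩ := aux_main k hk
  exact ⟨σ, σ', fun i => lt_of_lt_of_le (by norm_num) (h4 i).1,
    fun i => lt_of_lt_of_le (by norm_num) (h5 i).1, h1, h2, h3, h4, h5, h6,
    aux_moments k hk σ σ' h6⟩
end

section
/- Let u, v, w ∈ ℝ^d be unit vectors, set a := ⟨u, w⟩ and b := ⟨v, w⟩, and assume a ≠ 0 and b ≠ 0. Let Π := I_d − wwᵀ be the orthogonal projection onto the complement of w. Then ‖(1/a)·Πu − (1/b)·Πv‖₂² = (1/a − 1/b)² + ‖u − v‖₂²/(a·b). In particular, if a > 0 and b > 0 then ‖(1/a)·Πu − (1/b)·Πv‖₂² ≥ ‖u − v‖₂²/(a·b). -/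
/-- For unit vectors `u, v, w` with `a = ⟨u,w⟩ ≠ 0`, `b = ⟨v,w⟩ ≠ 0`, and
`Π = I − wwᵀ`: `‖(1/a)Πu − (1/b)Πv‖² = (1/a − 1/b)² + ‖u − v‖²/(ab)`; in particular, if
`a, b > 0` then `‖(1/a)Πu − (1/b)Πv‖² ≥ ‖u − v‖²/(ab)`. -/
theorem stmt18 (d : ℕ) (u v w : Fin d → ℝ)
    (hu : e2norm u = 1) (hv : e2norm v = 1) (hw : e2norm w = 1)
    (a b : ℝ) (ha : a = ∑ i, u i * w i) (hb : b = ∑ i, v i * w i)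
    (ha0 : a ≠ 0) (hb0 : b ≠ 0) :
    (e2norm ((1 / a) • (u - (∑ i, w i * u i) • w) - (1 / b) • (v - (∑ i, w i * v i) • w)) ^ 2
        = (1 / a - 1 / b) ^ 2 + e2norm (u - v) ^ 2 / (a * b)) ∧
      (0 < a → 0 < b →
        e2norm (u - v) ^ 2 / (a * b) ≤
          e2norm ((1 / a) • (u - (∑ i, w i * u i) • w)
            - (1 / b) • (v - (∑ i, w i * v i) • w)) ^ 2) := by
  have sqn : ∀ x : Fin d → ℝ, e2norm x ^ 2 = ∑ i, x i ^ 2 := fun x =>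
    Real.sq_sqrt (Finset.sum_nonneg fun i _ => sq_nonneg (x i))
  have hu2 : ∑ i, u i ^ 2 = 1 := by rw [← sqn, hu]; norm_num
  have hv2 : ∑ i, v i ^ 2 = 1 := by rw [← sqn, hv]; norm_num
  have ha' : ∑ i, w i * u i = a := by rw [ha]; exact Finset.sum_congr rfl fun i _ => mul_comm _ _
  have hb' : ∑ i, w i * v i = b := by rw [hb]; exact Finset.sum_congr rfl fun i _ => mul_comm _ _
  have comb : ∀ s t : ℝ, ∑ i, (s * u i - t * v i) ^ 2
      = s ^ 2 + t ^ 2 - 2 * s * t * ∑ i, u i * v i := by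
    intro s t
    have h : ∀ i, (s * u i - t * v i) ^ 2
        = s ^ 2 * u i ^ 2 + t ^ 2 * v i ^ 2 - 2 * s * t * (u i * v i) := fun i => by ring
    simp only [h, Finset.sum_sub_distrib, Finset.sum_add_distrib, ← Finset.mul_sum, hu2, hv2]
    ring
  have key : e2norm ((1 / a) • (u - (∑ i, w i * u i) • w)
      - (1 / b) • (v - (∑ i, w i * v i) • w)) ^ 2
        = (1 / a - 1 / b) ^ 2 + e2norm (u - v) ^ 2 / (a * b) := by
    rw [ha', hb']
    have e : (1 / a) • (u - a • w) - (1 / b) • (v - b • w)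
        = fun i => (1 / a) * u i - (1 / b) * v i := by
      funext i
      simp only [Pi.sub_apply, Pi.smul_apply, smul_eq_mul]
      field_simp
      ring
    have e' : u - v = fun i => 1 * u i - 1 * v i := by
      funext i
      simp
    rw [e, e', sqn, sqn, comb, comb]
    field_simp
    ring
  refine ⟨key, fun _ _ => ?_⟩
  rw [key]
  linarith [sq_nonneg (1 / a - 1 / b)]
end
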